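/- arXiv:1108.4078 — 7 statements merged into one kernel-verified Lean document; each statement's English description precedes it below -/
import Mathlib

section
/- Let A be a nonzero m×n matrix with integer entries such that ‖A‖∞ ≥ 3. Then the solution relative magnitude of A satisfies ω(A) ≤ (‖A‖∞ − 1)^(rank A). -/
/-- The relative magnitude of a nonzero vector: `max {|x j| / |x i| : x i ≠ 0}`. -/
noncomputable def omegaVec {n : ℕ} (x : Fin n → ℝ) : ℝ :=
  sSup {r : ℝ | ∃ i j : Fin n, x i ≠ 0 ∧ r = |x j| / |x i|}

/-- The solution relative magnitude of a matrix: `inf {ω x : x ∈ N(A), x ≠ 0}`,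
with the convention that it is `0` when the null space is trivial
(in Lean, `sInf ∅ = 0` for real numbers). -/
noncomputable def omegaMat {m n : ℕ} (A : Matrix (Fin m) (Fin n) ℝ) : ℝ :=
  sInf {r : ℝ | ∃ x : Fin n → ℝ, x ≠ 0 ∧ A.mulVec x = 0 ∧ r = omegaVec x}

/-- `‖A‖∞`: the maximum row ℓ1 norm of an integer matrix, as a natural number. -/
def normInf {m n : ℕ} (A : Matrix (Fin m) (Fin n) ℤ) : ℕ :=
  Finset.univ.sup fun i => ∑ j, (A i j).natAbs

/-!
A support-minimal nonzero kernel vector `x` is determined up to scale by its support: deleting one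
column `i` from the support leaves independent columns, and Cramer's rule on a nonsingular square
block of them expresses each ratio `x j / x i` as a quotient of two integer minors of order at most
`rank A`. The denominator is at least `1` in absolute value.

The numerator is controlled by Schinzel's inequality: `|det M| ≤ ∏ i, p i` whenever the positive
and the negative parts of each row `i` of `M` both sum to at most `p i`. Indeed, the difference of
two cofactors of the same row is again a cofactor, of the matrix in which one column is added to
the other, so by induction the cofactors of a row lie, together with `0`, in an interval of length
at most the product of the remaining `p i`.

After multiplying the columns by the signs of `x`, each relevant row of `A` is orthogonal to the
nonnegative vector `|x|`, so it has entries of both signs and neither of its two parts can exhaust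
its `ℓ¹` norm: one may take `p i = ‖A‖∞ - 1`.
-/

open Finset Matrix

theorem injective_update_of_notMem_range {α β : Type*} [DecidableEq α] {f : α → β}
    (hf : Function.Injective f) {b : β} (hb : b ∉ Set.range f) (a : α) :
    Function.Injective (Function.update f a b) := by
  intro k l h
  grind [Function.update_apply]

section PosPart

variable {α : Type*} [Lattice α] [AddCommGroup α] [AddLeftMono α]

theorem posPart_add_le (a b : α) : (a + b)⁺ ≤ a⁺ + b⁺ :=
  sup_le (add_le_add (le_posPart a) (le_posPart b))
    (add_nonneg (posPart_nonneg a) (posPart_nonneg b))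

theorem negPart_add_le (a b : α) : (a + b)⁻ ≤ a⁻ + b⁻ := by
  simpa only [← posPart_neg, neg_add] using posPart_add_le (-a) (-b)

end PosPart

section DeterminantBound

variable {R : Type*} [CommRing R]

theorem adjugate_updateCol_add {n : Type*} [Fintype n] [DecidableEq n] (M : Matrix n n R)
    {j k : n} (hjk : j ≠ k) (i : n) :
    (M.updateCol k fun s => M s k + M s j).adjugate j i = M.adjugate j i - M.adjugate k i := by
  let P := M.updateRow i (Pi.single j 1 - Pi.single k 1)
  have hP : M.adjugate j i = P.det + M.adjugate k i := by
    rw [adjugate_apply, adjugate_apply, ← det_updateRow_add, sub_add_cancel]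
  have hcol : (M.updateCol k fun s => M s k + M s j).updateRow i (Pi.single j 1) =
      P.updateCol k fun s => P s k + P s j := by
    ext s l
    rcases eq_or_ne s i with rfl | hs <;> rcases eq_or_ne l k with rfl | hl <;>
      simp [P, *, hjk.symm]
  rw [adjugate_apply, hcol, det_updateCol_add_self _ hjk.symm, hP, add_sub_cancel_right]

variable [LinearOrder R] [IsStrictOrderedRing R]

theorem sum_update_add_succAbove_le {n : ℕ} {φ : R → R}
    (hφ : ∀ a b, φ (a + b) ≤ φ a + φ b) (v : Fin (n + 1) → R) {j k : Fin (n + 1)} (hjk : j ≠ k) :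
    ∑ l, φ (Function.update v k (v k + v j) (j.succAbove l)) ≤ ∑ l, φ (v l) := by
  obtain ⟨k, rfl⟩ := Fin.exists_succAbove_eq hjk.symm
  have hle (l) : φ (Function.update v (j.succAbove k) (v (j.succAbove k) + v j) (j.succAbove l)) ≤
      φ (v (j.succAbove l)) + if l = k then φ (v j) else 0 := by
    rcases eq_or_ne l k with rfl | hl
    · simpa using hφ _ _
    · simp [hl]
  calc _ ≤ _ := sum_le_sum fun l _ => hle l
    _ = ∑ l, φ (v l) := by
      rw [sum_add_distrib, Fin.sum_univ_succAbove _ j, sum_ite_eq' univ, if_pos (mem_univ k),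
        add_comm]

theorem sum_mul_le_mul_sub {ι : Type*} [Fintype ι] {v c : ι → R} {p a b : R}
    (hpos : ∑ j, (v j)⁺ ≤ p) (hneg : ∑ j, (v j)⁻ ≤ p) (ha : a ≤ 0) (hb : 0 ≤ b)
    (hc : ∀ j, c j ∈ Set.Icc a b) : ∑ j, v j * c j ≤ p * (b - a) := by
  have hterm (j) : v j * c j ≤ (v j)⁺ * b + (v j)⁻ * -a :=
    calc
      v j * c j = (v j)⁺ * c j + (v j)⁻ * -c j := by
        linear_combination -c j * posPart_sub_negPart (v j)
      _ ≤ _ := by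
        have := (hc j).1
        have := (hc j).2
        gcongr
  calc
    ∑ j, v j * c j ≤ (∑ j, (v j)⁺) * b + (∑ j, (v j)⁻) * -a := by
      rw [sum_mul, sum_mul, ← sum_add_distrib]
      exact sum_le_sum fun j _ => hterm j
    _ ≤ p * b + p * -a := by
      have := neg_nonneg.mpr ha
      gcongr
    _ = p * (b - a) := by ring

theorem abs_sum_mul_le_mul {ι : Type*} [Fintype ι] [Nonempty ι] {v c : ι → R} {p q : R}
    (hpos : ∑ j, (v j)⁺ ≤ p) (hneg : ∑ j, (v j)⁻ ≤ p) (hc : ∀ j, |c j| ≤ q)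
    (hsub : ∀ j k, j ≠ k → |c j - c k| ≤ q) : |∑ j, v j * c j| ≤ p * q := by
  obtain ⟨k, hk⟩ := Finite.exists_max c
  obtain ⟨l, hl⟩ := Finite.exists_min c
  have hp : 0 ≤ p := (sum_nonneg fun j _ => posPart_nonneg (v j)).trans hpos
  have hq : 0 ≤ q := (abs_nonneg _).trans (hc k)
  have hwidth : max 0 (c k) - min 0 (c l) ≤ q := by
    have hkl : c k - c l ≤ q := by
      rcases eq_or_ne k l with rfl | h
      · rwa [sub_self]
      · exact (le_abs_self _).trans (hsub k l h)
    have := (abs_le.mp (hc k)).2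
    have := (abs_le.mp (hc l)).1
    rcases max_cases 0 (c k) with ⟨h, _⟩ | ⟨h, _⟩ <;>
      rcases min_cases 0 (c l) with ⟨h', _⟩ | ⟨h', _⟩ <;> rw [h, h'] <;> linarith
  have hmem (j) : c j ∈ Set.Icc (min 0 (c l)) (max 0 (c k)) :=
    ⟨min_le_of_right_le (hl j), le_max_of_le_right (hk j)⟩
  have upper {w : ι → R} (hw : ∑ j, (w j)⁺ ≤ p) (hw' : ∑ j, (w j)⁻ ≤ p) :
      ∑ j, w j * c j ≤ p * q :=
    (sum_mul_le_mul_sub hw hw' (min_le_left _ _) (le_max_left _ _) hmem).trans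
      (mul_le_mul_of_nonneg_left hwidth hp)
  refine abs_le'.mpr ⟨upper hpos hneg, ?_⟩
  rw [← sum_neg_distrib]
  simpa only [Pi.neg_apply, neg_mul] using
    upper (w := -v) (by simpa using hneg) (by simpa using hpos)

theorem abs_det_le_prod_of_fin {n : ℕ} (M : Matrix (Fin n) (Fin n) R) (p : Fin n → R)
    (hpos : ∀ i, ∑ j, (M i j)⁺ ≤ p i) (hneg : ∀ i, ∑ j, (M i j)⁻ ≤ p i) :
    |M.det| ≤ ∏ i, p i := by
  induction n with
  | zero => simp
  | succ n ih =>
    have minor_le {M' : Matrix (Fin (n + 1)) (Fin (n + 1)) R} (j)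
        (hpos' : ∀ i, ∑ l, (M' i (j.succAbove l))⁺ ≤ p i)
        (hneg' : ∀ i, ∑ l, (M' i (j.succAbove l))⁻ ≤ p i) :
        |M'.adjugate j 0| ≤ ∏ i : Fin n, p i.succ := by
      rw [adjugate_fin_succ_eq_det_submatrix, abs_mul, abs_pow, abs_neg, abs_one, one_pow, one_mul]
      exact ih _ _ (fun i => hpos' i.succ) fun i => hneg' i.succ
    rw [det_eq_sum_mul_adjugate_row M 0, Fin.prod_univ_succ]
    refine abs_sum_mul_le_mul (hpos 0) (hneg 0) (fun j => minor_le j (fun i => ?_) fun i => ?_)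
      fun j k hjk => ?_
    · refine le_trans ?_ (hpos i)
      rw [Fin.sum_univ_succAbove _ j]
      exact le_add_of_nonneg_left (posPart_nonneg _)
    · refine le_trans ?_ (hneg i)
      rw [Fin.sum_univ_succAbove _ j]
      exact le_add_of_nonneg_left (negPart_nonneg _)
    · rw [← adjugate_updateCol_add M hjk]
      exact minor_le j
        (fun i => (sum_update_add_succAbove_le posPart_add_le (M i) hjk).trans (hpos i))
        (fun i => (sum_update_add_succAbove_le negPart_add_le (M i) hjk).trans (hneg i))

theorem abs_det_le_prod {n : Type*} [Fintype n] [DecidableEq n] (M : Matrix n n R) (p : n → R)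
    (hpos : ∀ i, ∑ j, (M i j)⁺ ≤ p i) (hneg : ∀ i, ∑ j, (M i j)⁻ ≤ p i) :
    |M.det| ≤ ∏ i, p i := by
  let e := (Fintype.equivFin n).symm
  rw [← det_submatrix_equiv_self e, ← e.prod_comp]
  refine abs_det_le_prod_of_fin _ _ (fun i => ?_) fun i => ?_
  · simpa only [submatrix_apply, e.sum_comp fun j => (M (e i) j)⁺] using hpos (e i)
  · simpa only [submatrix_apply, e.sum_comp fun j => (M (e i) j)⁻] using hneg (e i)

end DeterminantBound

section SignBalance

variable {R : Type*} [Ring R] [LinearOrder R] [IsStrictOrderedRing R] {ι : Type*} [Fintype ι]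

theorem exists_neg_of_dotProduct_eq_zero {u y : ι → R} (hy : 0 ≤ y) (huy : u ⬝ᵥ y = 0)
    (hne : ∃ j, u j ≠ 0 ∧ y j ≠ 0) : ∃ j, u j < 0 := by
  by_contra! hu
  obtain ⟨j, huj, hyj⟩ := hne
  have hterm := (sum_eq_zero_iff_of_nonneg fun j _ => mul_nonneg (hu j) (hy j)).mp huy j
    (mem_univ j)
  exact mul_ne_zero huj hyj hterm

theorem sum_posPart_lt_sum_abs {u : ι → R} (hu : ∃ j, u j < 0) : ∑ j, (u j)⁺ < ∑ j, |u j| := by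
  obtain ⟨j, hj⟩ := hu
  refine sum_lt_sum (fun k _ => sup_le (le_abs_self _) (abs_nonneg _)) ⟨j, mem_univ j, ?_⟩
  rw [posPart_eq_zero.mpr hj.le]
  exact abs_pos.mpr hj.ne

theorem sum_posPart_lt_sum_abs_of_dotProduct_eq_zero {u : ι → ℤ} {y : ι → R} (hy : 0 ≤ y)
    (huy : (fun j => (u j : R)) ⬝ᵥ y = 0) (hne : ∃ j, u j ≠ 0 ∧ y j ≠ 0) :
    ∑ j, (u j)⁺ < ∑ j, |u j| := by
  refine sum_posPart_lt_sum_abs ?_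
  simpa only [Int.cast_lt_zero] using
    exists_neg_of_dotProduct_eq_zero hy huy (by simpa only [ne_eq, Int.cast_eq_zero] using hne)

theorem sum_posPart_and_negPart_mul_sign_lt {v : ι → ℤ} {x : ι → R}
    (hvx : (fun j => (v j : R)) ⬝ᵥ x = 0) (hne : ∃ j, v j ≠ 0 ∧ x j ≠ 0) :
    ∑ j, (v j * SignType.sign (x j) : ℤ)⁺ < ∑ j, |v j| ∧
      ∑ j, (v j * SignType.sign (x j) : ℤ)⁻ < ∑ j, |v j| := by
  let u (j : ι) : ℤ := v j * SignType.sign (x j)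
  have hu_abs : ∑ j, |u j| ≤ ∑ j, |v j| := by
    refine sum_le_sum fun j _ => ?_
    rcases lt_trichotomy (x j) 0 with h | h | h <;> simp [u, h]
  have hu_dot : (fun j => (u j : R)) ⬝ᵥ (fun j => |x j|) = 0 := by
    rw [← hvx]
    refine sum_congr rfl fun j _ => ?_
    simp [u, mul_assoc]
  have hu_ne : ∃ j, u j ≠ 0 ∧ |x j| ≠ 0 := by
    obtain ⟨j, hvj, hxj⟩ := hne
    refine ⟨j, mul_ne_zero hvj ?_, abs_ne_zero.mpr hxj⟩
    rcases hxj.lt_or_gt with h | h <;> simp [h]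
  have hx : 0 ≤ fun j => |x j| := fun j => abs_nonneg (x j)
  constructor
  · exact (sum_posPart_lt_sum_abs_of_dotProduct_eq_zero hx hu_dot hu_ne).trans_le hu_abs
  · refine lt_of_lt_of_le ?_ hu_abs
    simpa using sum_posPart_lt_sum_abs_of_dotProduct_eq_zero (u := -u) hx
      (by simpa [dotProduct] using hu_dot) (by simpa using hu_ne)

theorem abs_det_submatrix_le_pow {m κ : Type*} [Fintype κ] [DecidableEq κ] (A : Matrix m ι ℤ)
    {N : ℤ} (hN : ∀ i, ∑ j, |A i j| ≤ N) {x : ι → R} (hx : A.map (Int.cast : ℤ → R) *ᵥ x = 0)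
    (ρ : κ → m) {σ : κ → ι} (hσ : Function.Injective σ) (hσx : ∀ k, x (σ k) ≠ 0)
    (hρ : ∀ s, ∃ j, A (ρ s) j ≠ 0 ∧ x j ≠ 0) :
    |(A.submatrix ρ σ).det| ≤ (N - 1) ^ Fintype.card κ := by
  let ε (j : ι) : ℤ := SignType.sign (x j)
  have hε (k) : |ε (σ k)| = 1 := by
    rcases (hσx k).lt_or_gt with h | h <;> simp [ε, h]
  have hdet : |(A.submatrix ρ σ * diagonal (ε ∘ σ)).det| = |(A.submatrix ρ σ).det| := by
    simp [abs_mul, abs_prod, hε]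
  have sum_comp_le {φ : ι → ℤ} (hφ : 0 ≤ φ) : ∑ k, φ (σ k) ≤ ∑ j, φ j :=
    (sum_map univ ⟨σ, hσ⟩ φ).symm.trans_le (sum_le_univ_sum_of_nonneg hφ)
  have hrow (s) := sum_posPart_and_negPart_mul_sign_lt (congrFun hx (ρ s)) (hρ s)
  rw [← hdet, ← card_univ, ← prod_const]
  refine abs_det_le_prod _ _ (fun s => ?_) fun s => ?_
  · simp only [mul_diagonal, submatrix_apply, Function.comp_apply]
    refine Int.le_sub_one_of_lt (lt_of_le_of_lt ?_ ((hrow s).1.trans_le (hN _)))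
    exact sum_comp_le fun j => posPart_nonneg (A (ρ s) j * ε j)
  · simp only [mul_diagonal, submatrix_apply, Function.comp_apply]
    refine Int.le_sub_one_of_lt (lt_of_le_of_lt ?_ ((hrow s).2.trans_le (hN _)))
    exact sum_comp_le fun j => negPart_nonneg (A (ρ s) j * ε j)

end SignBalance

section Minors

variable {K : Type*} [Field K] {m ι κ : Type*} [Fintype κ] [DecidableEq κ]

theorem exists_submatrix_det_ne_zero [Finite m] (C : Matrix m κ K)
    (hC : LinearIndependent K C.col) :
    ∃ ρ : κ → m, (C.submatrix ρ id).det ≠ 0 := by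
  obtain ⟨f, hf, -, hli⟩ := Submodule.exists_fun_fin_finrank_span_eq K (Set.range C.row)
  have hcard : Fintype.card κ = Module.finrank K (Submodule.span K (Set.range C.row)) := by
    rw [← rank_eq_finrank_span_row, rank_eq_finrank_span_cols, finrank_span_eq_card hC]
  let e : κ ≃ Fin _ := Fintype.equivFinOfCardEq hcard
  choose ρ hρ using hf
  refine ⟨ρ ∘ e, ?_⟩
  have hrows : (C.submatrix (ρ ∘ e) id).row = f ∘ e := funext fun k => hρ (e k)
  rw [← isUnit_iff_ne_zero, ← isUnit_iff_isUnit_det, ← linearIndependent_rows_iff_isUnit, hrows]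
  exact hli.comp e e.injective

theorem card_le_rank_of_det_submatrix_ne_zero {R : Type*} [CommRing R] [IsDomain R] [Fintype ι]
    (A : Matrix m ι R) (ρ : κ → m) (σ : κ → ι) (h : (A.submatrix ρ σ).det ≠ 0) :
    Fintype.card κ ≤ A.rank := by
  rw [← rank_of_det_ne_zero h]
  exact rank_submatrix_le _ _ _

theorem apply_mul_det_eq_of_mulVec_eq_smul {R : Type*} [CommRing R] {B : Matrix κ κ R}
    {z b : κ → R} {c : R} (h : B *ᵥ z = c • b) (j : κ) :
    z j * B.det = c * (B.updateCol j b).det := by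
  have : B.det • z = c • cramer B b := by
    rw [← map_smul, ← h, cramer_eq_adjugate_mulVec, mulVec_mulVec, adjugate_mul, smul_mulVec,
      one_mulVec]
  simpa [cramer_apply, mul_comm] using congrFun this j

end Minors

section KernelVectors

variable {R : Type*} [CommRing R] {m ι : Type*} [Fintype ι]

theorem submatrix_mulVec_comp_of_support_subset {m' κ : Type*} [Fintype κ] (A : Matrix m ι R)
    {z : ι → R} (ρ : m' → m) {f : κ → ι} (hf : Function.Injective f)
    (hz : z.support ⊆ Set.range f) : A.submatrix ρ f *ᵥ (z ∘ f) = (A *ᵥ z) ∘ ρ :=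
  funext fun s => Fintype.sum_of_injective f hf _ (fun k => A (ρ s) k * z k)
    (fun _ hk => by rw [Function.notMem_support.mp (mt (@hz _) hk), mul_zero]) fun _ => rfl

theorem mul_det_submatrix_eq_neg_mul_det_submatrix_update {κ : Type*} [Fintype κ] [DecidableEq κ]
    {A : Matrix m ι R} {x : ι → R} (hx : A *ᵥ x = 0) (ρ : κ → m) {f : κ → ι}
    (hf : Function.Injective f) {i : ι} (hi : i ∉ Set.range f)
    (hsupp : x.support ⊆ insert i (Set.range f)) (j : κ) :
    x (f j) * (A.submatrix ρ f).det =
      -x i * (A.submatrix ρ (Function.update f j i)).det := by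
  classical
  let z : ι → R := x - Pi.single i (x i)
  have hz_supp : z.support ⊆ Set.range f := by
    intro k hk
    rcases eq_or_ne k i with rfl | hki
    · simp [z] at hk
    · exact (hsupp (by simpa [z, hki] using hk)).resolve_left hki
  have hz_comp : z ∘ f = x ∘ f := by
    ext k
    have hk : f k ≠ i := fun h => hi ⟨k, h⟩
    simp [z, hk]
  have hAz : A *ᵥ z = -x i • A.col i := by
    ext s
    simp [z, mulVec_sub, hx, mul_comm]
  have hmul : A.submatrix ρ f *ᵥ (x ∘ f) = -x i • fun s => A (ρ s) i := by
    rw [← hz_comp, submatrix_mulVec_comp_of_support_subset A ρ hf hz_supp, hAz]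
    rfl
  have hcol : (A.submatrix ρ f).updateCol j (fun s => A (ρ s) i) =
      A.submatrix ρ (Function.update f j i) := by
    ext s k
    rcases eq_or_ne k j with rfl | hk <;> simp [*]
  rw [← hcol]
  exact apply_mul_det_eq_of_mulVec_eq_smul hmul j

/-- A nonzero vector of a coordinate subspace `V` is *elementary* (in the sense of Rockafellar) if
its support is minimal among the supports of the nonzero vectors of `V`. -/
def IsElementaryVector {R ι : Type*} [Semiring R] (V : Submodule R (ι → R)) (x : ι → R) : Prop :=
  MinimalFor (fun y => y ∈ V ∧ y ≠ 0) Function.support x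

theorem exists_isElementaryVector {R ι : Type*} [Semiring R] [Finite ι] {V : Submodule R (ι → R)}
    (hV : V ≠ ⊥) : ∃ x, IsElementaryVector V x :=
  exists_minimalFor_of_wellFoundedLT _ _ (V.exists_mem_ne_zero_of_ne_bot hV)

theorem IsElementaryVector.linearIndependent_col {A : Matrix m ι R} {x : ι → R}
    (hx : IsElementaryVector (LinearMap.ker A.mulVecLin) x) {i : ι} (hi : x i ≠ 0) :
    LinearIndependent R (A.submatrix id ((↑) : ↥(x.support \ {i}) → ι)).col := by
  have := Fintype.ofFinite ↥(x.support \ {i})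
  let f : ↥(x.support \ {i}) → ι := (↑)
  have hf : Function.Injective f := Subtype.val_injective
  rw [← mulVec_injective_iff]
  refine (injective_iff_map_eq_zero (A.submatrix id f).mulVecLin).mpr fun g hg => ?_
  let z : ι → R := Function.extend f g 0
  have hzg : z ∘ f = g := Function.extend_comp hf g 0
  have hz_supp : z.support ⊆ x.support \ {i} := by
    intro k hk
    by_contra hkf
    exact hk (Function.extend_apply' g (0 : ι → R) k fun ⟨l, hl⟩ => hkf (hl ▸ l.2))
  have hz_ker : A *ᵥ z = 0 := by
    rw [← hg, ← hzg]
    exact (submatrix_mulVec_comp_of_support_subset A id hf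
      (hz_supp.trans_eq Subtype.range_coe.symm)).symm
  have hz_lt : z.support < x.support :=
    hz_supp.trans_ssubset (Set.sdiff_singleton_ssubset.mpr hi)
  have hz : z = 0 := by
    by_contra hz0
    exact hx.not_prop_of_lt hz_lt ⟨hz_ker, hz0⟩
  rw [← hzg, hz]
  rfl

end KernelVectors

section CoordinateRatio

variable {K : Type*} [Field K] [LinearOrder K] [IsStrictOrderedRing K]
  {m ι : Type*} [Fintype ι]

theorem abs_le_pow_card_mul_abs {κ : Type*} [Fintype κ] [DecidableEq κ] {A : Matrix m ι ℤ}
    {N : ℤ} (hN : ∀ i, ∑ j, |A i j| ≤ N) {x : ι → K} (hx : A.map (Int.cast : ℤ → K) *ᵥ x = 0)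
    {ρ : κ → m} {f : κ → ι} (hf : Function.Injective f) {i : ι} (hi : i ∉ Set.range f)
    (hsupp : x.support = insert i (Set.range f))
    (hdet : ((A.map (Int.cast : ℤ → K)).submatrix ρ f).det ≠ 0) (j : κ) :
    |x (f j)| ≤ ((N : K) - 1) ^ Fintype.card κ * |x i| := by
  have hcast (g : κ → ι) :
      ((A.map (Int.cast : ℤ → K)).submatrix ρ g).det = ((A.submatrix ρ g).det : K) :=
    (Int.cast_det (A.submatrix ρ g)).symm
  let g := Function.update f j i
  have hcramer : x (f j) * (A.submatrix ρ f).det = -x i * (A.submatrix ρ g).det := by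
    rw [← hcast, ← hcast]
    exact mul_det_submatrix_eq_neg_mul_det_submatrix_update hx ρ hf hi hsupp.subset j
  rw [hcast, Int.cast_ne_zero] at hdet
  have hone : (1 : K) ≤ |((A.submatrix ρ f).det : K)| := by
    exact_mod_cast Int.one_le_abs hdet
  have hxi : x i ≠ 0 := hsupp.superset (Set.mem_insert i _)
  have hfx (k) : x (f k) ≠ 0 := hsupp.superset (Set.mem_insert_of_mem i ⟨k, rfl⟩)
  have hgx (k) : x (g k) ≠ 0 := by
    rcases eq_or_ne k j with rfl | hk
    · simpa only [g, Function.update_self] using hxi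
    · simpa only [g, Function.update_of_ne hk] using hfx k
  have hρ (s) : ∃ k, A (ρ s) k ≠ 0 ∧ x k ≠ 0 := by
    by_contra! h
    exact hdet (det_eq_zero_of_row_eq_zero s fun k => by_contra fun hk => hfx k (h (f k) hk))
  calc
    |x (f j)| ≤ |x (f j)| * |((A.submatrix ρ f).det : K)| :=
      le_mul_of_one_le_right (abs_nonneg _) hone
    _ = |((A.submatrix ρ g).det : K)| * |x i| := by
      rw [← abs_mul, hcramer, abs_mul, abs_neg, mul_comm]
    _ ≤ ((N : K) - 1) ^ Fintype.card κ * |x i| := by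
      gcongr
      exact_mod_cast abs_det_submatrix_le_pow A hN hx ρ
        (injective_update_of_notMem_range hf hi j) hgx hρ

theorem IsElementaryVector.abs_le_pow_rank_mul_abs [Finite m] {A : Matrix m ι ℤ} {N : ℤ}
    (hN2 : 2 ≤ N) (hN : ∀ i, ∑ j, |A i j| ≤ N) {x : ι → K}
    (hx : IsElementaryVector (LinearMap.ker (A.map (Int.cast : ℤ → K)).mulVecLin) x) {i : ι}
    (hi : x i ≠ 0) (j : ι) :
    |x j| ≤ ((N : K) - 1) ^ (A.map (Int.cast : ℤ → K)).rank * |x i| := by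
  classical
  have hbase : (1 : K) ≤ N - 1 := by exact_mod_cast Int.le_sub_one_of_lt hN2
  rcases eq_or_ne j i with rfl | hji
  · exact le_mul_of_one_le_left (abs_nonneg _) (one_le_pow₀ hbase)
  by_cases hj : x j = 0
  · rw [hj, abs_zero]
    positivity
  let f : ↥(x.support \ {i}) → ι := (↑)
  have hrange : Set.range f = x.support \ {i} := Subtype.range_coe
  have hi_range : i ∉ Set.range f := fun ⟨k, hk⟩ => k.2.2 hk
  have hsupp : x.support = insert i (Set.range f) := by
    rw [hrange, Set.insert_sdiff_singleton, Set.insert_eq_of_mem hi]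
  have := Fintype.ofFinite ↥(x.support \ {i})
  obtain ⟨ρ, hdet⟩ := exists_submatrix_det_ne_zero _ (hx.linearIndependent_col hi)
  refine (abs_le_pow_card_mul_abs hN hx.1.1 Subtype.val_injective hi_range hsupp hdet
    ⟨j, hj, hji⟩).trans ?_
  gcongr
  exact card_le_rank_of_det_submatrix_ne_zero _ ρ f hdet

end CoordinateRatio

theorem omegaMat_le_of_forall_abs_le {m n : ℕ} {A : Matrix (Fin m) (Fin n) ℝ} {x : Fin n → ℝ}
    (hx : x ≠ 0) (hAx : A *ᵥ x = 0) {c : ℝ} (h : ∀ i j, x i ≠ 0 → |x j| ≤ c * |x i|) :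
    omegaMat A ≤ c := by
  have hbdd : BddBelow {r : ℝ | ∃ y : Fin n → ℝ, y ≠ 0 ∧ A *ᵥ y = 0 ∧ r = omegaVec y} := by
    refine ⟨0, ?_⟩
    rintro _ ⟨y, -, -, rfl⟩
    refine Real.sSup_nonneg ?_
    rintro _ ⟨i, j, -, rfl⟩
    positivity
  obtain ⟨k, hk⟩ := Function.ne_iff.mp hx
  refine (csInf_le hbdd ⟨x, hx, hAx, rfl⟩).trans (csSup_le ⟨_, k, k, hk, rfl⟩ ?_)
  rintro _ ⟨i, j, hi, rfl⟩
  exact (div_le_iff₀ (abs_pos.mpr hi)).mpr (h i j hi)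

theorem omegaMat_eq_zero_of_ker_eq_bot {m n : ℕ} {A : Matrix (Fin m) (Fin n) ℝ}
    (hA : LinearMap.ker A.mulVecLin = ⊥) : omegaMat A = 0 := by
  have hempty : {r : ℝ | ∃ y : Fin n → ℝ, y ≠ 0 ∧ A *ᵥ y = 0 ∧ r = omegaVec y} = ∅ := by
    refine Set.eq_empty_of_forall_notMem ?_
    rintro _ ⟨y, hy, hAy, -⟩
    exact hy ((Submodule.eq_bot_iff _).mp hA y hAy)
  exact (congrArg sInf hempty).trans Real.sInf_empty

theorem sum_abs_le_normInf {m n : ℕ} (A : Matrix (Fin m) (Fin n) ℤ) (i : Fin m) :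
    ∑ j, |A i j| ≤ (normInf A : ℤ) := by
  simp only [Int.abs_eq_natAbs]
  exact_mod_cast le_sup (f := fun i => ∑ j, (A i j).natAbs) (mem_univ i)

theorem stmt0_general {m n : ℕ} (A : Matrix (Fin m) (Fin n) ℤ) (hnorm : 2 ≤ normInf A) :
    omegaMat (A.map (Int.cast : ℤ → ℝ)) ≤
      ((normInf A : ℝ) - 1) ^ (A.map (Int.cast : ℤ → ℝ)).rank := by
  have hbase : (0 : ℝ) ≤ normInf A - 1 := by
    have : (2 : ℝ) ≤ normInf A := by exact_mod_cast hnorm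
    linarith
  by_cases hker : LinearMap.ker (A.map (Int.cast : ℤ → ℝ)).mulVecLin = ⊥
  · rw [omegaMat_eq_zero_of_ker_eq_bot hker]
    positivity
  · obtain ⟨x, hx⟩ := exists_isElementaryVector hker
    refine omegaMat_le_of_forall_abs_le hx.1.2 hx.1.1 fun i j hi => ?_
    exact_mod_cast hx.abs_le_pow_rank_mul_abs (by exact_mod_cast hnorm) (sum_abs_le_normInf A) hi j

theorem stmt0 {m n : ℕ} (A : Matrix (Fin m) (Fin n) ℤ) (hA : A ≠ 0)
    (hnorm : 3 ≤ normInf A) :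
    omegaMat (A.map (Int.cast : ℤ → ℝ)) ≤
      ((normInf A : ℝ) - 1) ^ (A.map (Int.cast : ℤ → ℝ)).rank :=
  stmt0_general A (Nat.le_of_succ_le hnorm)
end

section
/- Fix integers k ≥ 1 and n ≥ 2. Let A be the (n−1)×n integer matrix whose i-th row encodes the equation k·x_i − x_{i+1} = 0, i.e., A_{i,i} = k, A_{i,i+1} = −1, and all other entries are 0. Then ‖A‖∞ = k+1, rank A = n−1, the null space of A is the one-dimensional span of the vector v = (1, k, k^2, …, k^{n−1}), and every nonzero x in the null space of A satisfies ω(x) = k^{n−1}; in particular ω(A) = k^{n−1}, so the bound ω(A) ≤ (‖A‖∞ − 1)^{rank A} is sharp. -/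
/-!
A null vector of `A` satisfies `x (i + 1) = k * x i`, so it is a geometric progression determined
by `x 0`. The relative magnitude is invariant under scaling, hence constant on the nonzero vectors
of this line, and for `(1, k, …, k ^ (n - 1))` the extreme ratio is that of the last entry to the
first. The same recurrence with an arbitrary right-hand side can be solved starting from `x 0 = 0`,
so `A` has full row rank.
-/

lemma omegaVec_smul {n : ℕ} {c : ℝ} (hc : c ≠ 0) (x : Fin n → ℝ) :
    omegaVec (c • x) = omegaVec x := by
  simp only [omegaVec, Pi.smul_apply, smul_eq_mul, abs_mul, mul_ne_zero_iff_left hc,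
    mul_div_mul_left _ _ (abs_ne_zero.mpr hc)]

lemma omegaVec_eq_of_mem_span_singleton {n : ℕ} {x v : Fin n → ℝ} (hx : x ≠ 0)
    (hxv : x ∈ Submodule.span ℝ {v}) : omegaVec x = omegaVec v := by
  obtain ⟨c, rfl⟩ := Submodule.mem_span_singleton.mp hxv
  exact omegaVec_smul (left_ne_zero_of_smul hx) v

lemma omegaMat_eq_of_ker_eq_span_singleton {m n : ℕ} {A : Matrix (Fin m) (Fin n) ℝ}
    {v : Fin n → ℝ} (hv : v ≠ 0) (hA : LinearMap.ker A.mulVecLin = Submodule.span ℝ {v}) :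
    omegaMat A = omegaVec v := by
  have mem_span_iff (x) : A.mulVec x = 0 ↔ x ∈ Submodule.span ℝ {v} := by
    rw [← hA, LinearMap.mem_ker, Matrix.mulVecLin_apply]
  refine IsLeast.csInf_eq
    ⟨⟨v, hv, (mem_span_iff v).mpr (Submodule.mem_span_singleton_self v), rfl⟩, ?_⟩
  rintro _ ⟨x, hx, hAx, rfl⟩
  exact (omegaVec_eq_of_mem_span_singleton hx ((mem_span_iff x).mp hAx)).ge

lemma omegaVec_pow {a : ℝ} (ha : 1 ≤ |a|) (m : ℕ) :
    omegaVec (fun j : Fin (m + 1) => a ^ (j : ℕ)) = |a| ^ m := by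
  refine IsGreatest.csSup_eq ⟨⟨0, Fin.last m, by simp, by simp⟩, ?_⟩
  rintro _ ⟨i, j, -, rfl⟩
  calc |a ^ (j : ℕ)| / |a ^ (i : ℕ)| = |a| ^ (j : ℕ) / |a| ^ (i : ℕ) := by simp only [abs_pow]
    _ ≤ |a| ^ (j : ℕ) := div_le_self (by positivity) (one_le_pow₀ ha)
    _ ≤ |a| ^ m := pow_le_pow_right₀ ha j.is_le

/-- The matrix of the recurrence `x (i + 1) = a * x i` for `i < m`. Its `i`-th row has `a` in column
`i` and `-1` in column `i + 1`, and its null space consists of the geometric progressions of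
ratio `a`. -/
def geometricMatrix {R : Type*} [Ring R] (a : R) (m : ℕ) : Matrix (Fin m) (Fin (m + 1)) R :=
  Matrix.of fun i => Pi.single i.castSucc a - Pi.single i.succ 1

lemma eq_geometricMatrix {R : Type*} [Ring R] {a : R} {m : ℕ}
    {A : Matrix (Fin m) (Fin (m + 1)) R}
    (hA : ∀ i j, A i j = if (j : ℕ) = i then a else if (j : ℕ) = i + 1 then -1 else 0) :
    A = geometricMatrix a m := by
  ext i j
  simp only [hA, geometricMatrix, Matrix.of_apply, Pi.sub_apply, Pi.single_apply, Fin.ext_iff,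
    Fin.val_castSucc, Fin.val_succ]
  grind

lemma geometricMatrix_map {R S : Type*} [Ring R] [Ring S] (f : R →+* S) (a : R) (m : ℕ) :
    (geometricMatrix a m).map f = geometricMatrix (f a) m := by
  ext i j
  simp [geometricMatrix, Pi.single_apply, apply_ite f]

lemma geometricMatrix_mulVec {R : Type*} [Ring R] (a : R) {m : ℕ} (x : Fin (m + 1) → R)
    (i : Fin m) : (geometricMatrix a m).mulVec x i = a * x i.castSucc - x i.succ := by
  change (Pi.single i.castSucc a - Pi.single i.succ 1) ⬝ᵥ x = _
  rw [sub_dotProduct, single_dotProduct, single_one_dotProduct]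

lemma geometricMatrix_mulVec_surjective {R : Type*} [Ring R] (a : R) (m : ℕ) :
    Function.Surjective (geometricMatrix a m).mulVec := by
  intro y
  let x : Fin (m + 1) → R := Fin.induction 0 fun i xi => a * xi - y i
  have hx (i : Fin m) : x i.succ = a * x i.castSucc - y i := Fin.induction_succ ..
  refine ⟨x, funext fun i => ?_⟩
  rw [geometricMatrix_mulVec, hx, sub_sub_cancel]

lemma rank_geometricMatrix {R : Type*} [CommRing R] [Nontrivial R] (a : R) (m : ℕ) :
    (geometricMatrix a m).rank = m := by
  have range_eq_top : LinearMap.range (geometricMatrix a m).mulVecLin = ⊤ :=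
    LinearMap.range_eq_top.mpr (geometricMatrix_mulVec_surjective a m)
  rw [Matrix.rank, range_eq_top, finrank_top, Module.finrank_fin_fun]

lemma ker_geometricMatrix {R : Type*} [CommRing R] (a : R) (m : ℕ) :
    LinearMap.ker (geometricMatrix a m).mulVecLin =
      Submodule.span R {fun j : Fin (m + 1) => a ^ (j : ℕ)} := by
  ext x
  rw [LinearMap.mem_ker, Matrix.mulVecLin_apply, Submodule.mem_span_singleton]
  constructor
  · intro hx
    have hrec (i : Fin m) : x i.succ = a * x i.castSucc := by
      rw [eq_comm, ← sub_eq_zero, ← geometricMatrix_mulVec, hx, Pi.zero_apply]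
    refine ⟨x 0, funext fun j => ?_⟩
    induction j using Fin.induction with
    | zero => simp
    | succ i ih =>
      rw [hrec, ← ih]
      simp only [Pi.smul_apply, smul_eq_mul, Fin.val_castSucc, Fin.val_succ]
      ring
  · rintro ⟨c, rfl⟩
    ext i
    simp only [geometricMatrix_mulVec, Pi.smul_apply, smul_eq_mul, Fin.val_castSucc,
      Fin.val_succ, Pi.zero_apply]
    ring

lemma sum_natAbs_geometricMatrix (a : ℤ) {m : ℕ} (i : Fin m) :
    ∑ j, (geometricMatrix a m i j).natAbs = a.natAbs + 1 := by
  have hne : i.castSucc ≠ i.succ := i.castSucc_lt_succ.ne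
  rw [Fintype.sum_eq_add _ _ hne fun j hj => by simp [geometricMatrix, hj.1, hj.2]]
  simp [geometricMatrix, hne, hne.symm]

lemma normInf_geometricMatrix (a : ℤ) {m : ℕ} (hm : 0 < m) :
    normInf (geometricMatrix a m) = a.natAbs + 1 := by
  simp only [normInf, sum_natAbs_geometricMatrix]
  exact Finset.sup_const ⟨⟨0, hm⟩, Finset.mem_univ _⟩ _

theorem stmt2_general {k : ℤ} {n : ℕ} (hk : k ≠ 0) (hn : 2 ≤ n)
    (A : Matrix (Fin (n - 1)) (Fin n) ℤ)
    (hA : ∀ (i : Fin (n - 1)) (j : Fin n),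
      A i j = if (j : ℕ) = (i : ℕ) then k
              else if (j : ℕ) = (i : ℕ) + 1 then -1 else 0) :
    normInf A = k.natAbs + 1 ∧
    (A.map (Int.cast : ℤ → ℝ)).rank = n - 1 ∧
    LinearMap.ker (A.map (Int.cast : ℤ → ℝ)).mulVecLin =
      Submodule.span ℝ {fun j : Fin n => (k : ℝ) ^ (j : ℕ)} ∧
    (∀ x : Fin n → ℝ, x ≠ 0 → (A.map (Int.cast : ℤ → ℝ)).mulVec x = 0 →
      omegaVec x = |(k : ℝ)| ^ (n - 1)) ∧
    omegaMat (A.map (Int.cast : ℤ → ℝ)) = |(k : ℝ)| ^ (n - 1) ∧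
    omegaMat (A.map (Int.cast : ℤ → ℝ)) =
      ((normInf A : ℝ) - 1) ^ (A.map (Int.cast : ℤ → ℝ)).rank := by
  obtain ⟨m, rfl⟩ : ∃ m, n = m + 1 := ⟨n - 1, by omega⟩
  obtain rfl : A = geometricMatrix k m := eq_geometricMatrix hA
  have hmap : (geometricMatrix k m).map (Int.cast : ℤ → ℝ) = geometricMatrix (k : ℝ) m :=
    geometricMatrix_map (Int.castRingHom ℝ) k m
  have hnorm := normInf_geometricMatrix k (show 0 < m by omega)
  have hrank := rank_geometricMatrix (k : ℝ) m
  have hker := ker_geometricMatrix (k : ℝ) m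
  have hpow := omegaVec_pow (show 1 ≤ |(k : ℝ)| by exact_mod_cast Int.one_le_abs hk) m
  have hv : (fun j : Fin (m + 1) => (k : ℝ) ^ (j : ℕ)) ≠ 0 := fun h => by simpa using congrFun h 0
  have homega := (omegaMat_eq_of_ker_eq_span_singleton hv hker).trans hpow
  rw [hmap]
  refine ⟨hnorm, hrank, hker, fun x hx hAx => ?_, homega, ?_⟩
  · exact (omegaVec_eq_of_mem_span_singleton hx (hker ▸ LinearMap.mem_ker.mpr hAx)).trans hpow
  · rw [homega, hnorm, hrank]
    simp

theorem stmt2 {k n : ℕ} (hk : 1 ≤ k) (hn : 2 ≤ n)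
    (A : Matrix (Fin (n - 1)) (Fin n) ℤ)
    (hA : ∀ (i : Fin (n - 1)) (j : Fin n),
      A i j = if (j : ℕ) = (i : ℕ) then (k : ℤ)
              else if (j : ℕ) = (i : ℕ) + 1 then -1 else 0) :
    normInf A = k + 1 ∧
    (A.map (Int.cast : ℤ → ℝ)).rank = n - 1 ∧
    LinearMap.ker (A.map (Int.cast : ℤ → ℝ)).mulVecLin =
      Submodule.span ℝ {fun j : Fin n => (k : ℝ) ^ (j : ℕ)} ∧
    (∀ x : Fin n → ℝ, x ≠ 0 → (A.map (Int.cast : ℤ → ℝ)).mulVec x = 0 →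
      omegaVec x = (k : ℝ) ^ (n - 1)) ∧
    omegaMat (A.map (Int.cast : ℤ → ℝ)) = (k : ℝ) ^ (n - 1) ∧
    omegaMat (A.map (Int.cast : ℤ → ℝ)) =
      ((normInf A : ℝ) - 1) ^ (A.map (Int.cast : ℤ → ℝ)).rank := by
  simpa using stmt2_general (Int.natCast_ne_zero.mpr (Nat.one_le_iff_ne_zero.mp hk)) hn A hA
end

section
/- Fix an integer k ≥ 2. Consider a linear system A x = b with A ∈ ℤ^{m×N} and b ∈ ℤ^m in which every equation (row i) is of one of the following two types: (1) x_j = ±1, i.e., the i-th row of A equals a standard basis vector e_j and b_i ∈ {−1, +1}; or (2) a homogeneous equation whose integer coefficient vector has ℓ1 norm at most k+1, i.e., Σ_j |A_{ij}| ≤ k+1 and b_i = 0 (this encodes equations ±x_{i_1} ± x_{i_2} ± … ± x_{i_{l+1}} = 0 with l ≤ k, where indices may repeat). Let n := rank A and assume n ≥ 1. If the system has a real solution, then it has a rational solution x ∈ ℚ^N such that |x_j| ≤ k^{n−1} for every coordinate j. -/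
/-!
By elimination we may take a rational solution whose support indexes linearly independent columns,
so that the support has at most `rank A` elements. Group the absolute values on the support into
maximal geometric chains `t, t / k, …, t / k ^ l`. Writing each entry as `±k⁻ᵈ` times the top of its
chain collapses every equation to a relation between the tops, whose coefficients satisfy
`∑ p² ≤ k²`: a homogeneous equation has `ℓ¹` norm at most `k + 1`, and the only nontrivial pattern
exceeding this bound, `k t ± v i = 0`, is excluded since `t` is the top of its chain.

A maximal independent set of collapsed equations, together with one entry equal to `±1`, forms a
square system `M w = ± e` for the vector `w` of tops. Multiplying the column of `t` by `k ^ l` makes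
`M` integral, which bounds `|det M|` from below, and Hadamard's inequality bounds its cofactors from
above. By Cramer's rule each top is at most `k ^ (#tops - 1 + ∑ l)`, and `#tops + ∑ l` is at most
the size of the support.
-/

open Finset Matrix Module

section LinearAlgebra

variable {K m n : Type*} [Field K] [Fintype n]

lemma exists_mulVec_eq_of_map_algebraMap {L : Type*} [Field L] [Algebra K L] {A : Matrix m n K}
    {b : m → K} {x : n → L} (hx : A.map (algebraMap K L) *ᵥ x = algebraMap K L ∘ b) :
    ∃ y : n → K, A *ᵥ y = b := by
  obtain ⟨f, hf⟩ := LinearMap.exists_leftInverse_of_injective (Algebra.linearMap K L)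
    (LinearMap.ker_eq_bot.2 (algebraMap K L).injective)
  refine ⟨f ∘ x, funext fun i => ?_⟩
  calc (A *ᵥ (f ∘ x)) i = f ((A.map (algebraMap K L) *ᵥ x) i) := by
        simp [mulVec, dotProduct, ← Algebra.smul_def]
    _ = b i := by rw [hx]; exact LinearMap.congr_fun hf (b i)

lemma exists_mulVec_eq_linearIndepOn_support (A : Matrix m n K) (x : n → K) :
    ∃ y : n → K, A *ᵥ y = A *ᵥ x ∧ LinearIndepOn K A.col (Function.support y) := by
  obtain ⟨s, -, -, hspan, hs⟩ :=
    exists_linearIndepOn_extension (linearIndepOn_empty K A.col) (Set.empty_subset Set.univ)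
  have hmem : A *ᵥ x ∈ Submodule.span K (A.col '' s) := by
    refine Submodule.span_le.2 hspan ?_
    rw [Set.image_univ, ← range_mulVecLin]
    exact ⟨x, rfl⟩
  obtain ⟨y, hys, hy⟩ := (Finsupp.mem_span_image_iff_linearCombination K).1 hmem
  refine ⟨y, ?_, hs.mono fun j hj => hys (Finsupp.mem_support_iff.2 hj)⟩
  rw [← hy, Finsupp.linearCombination_apply, Finsupp.sum_fintype]
  · ext i
    simp [mulVec, dotProduct, mul_comm]
  · simp

lemma card_le_rank_of_linearIndepOn_col {A : Matrix m n K} {s : Set n} [Fintype s]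
    (hs : LinearIndepOn K A.col s) : Fintype.card s ≤ A.rank :=
  calc Fintype.card s = (A.submatrix id ((↑) : s → n)).rank := by
        rw [rank_eq_finrank_span_cols]; exact (finrank_span_eq_card hs).symm
    _ ≤ A.rank := rank_submatrix_le A id _

lemma span_eq_top_of_forall_dotProduct_eq_zero {S : Set (n → K)}
    (h : ∀ z : n → K, (∀ p ∈ S, z ⬝ᵥ p = 0) → z = 0) : Submodule.span K S = ⊤ := by
  classical
  by_contra hS
  obtain ⟨f, hf, hker⟩ := Submodule.exists_le_ker_of_lt_top _ (lt_top_iff_ne_top.2 hS)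
  obtain ⟨z, rfl⟩ := (dotProductEquiv K n).surjective f
  refine hf ?_
  rw [h z fun p hp => hker (Submodule.subset_span hp), map_zero]

lemma exists_det_ne_zero_of_span_insert_eq_top [DecidableEq n] {S : Set (n → K)} {q : n → K}
    (hq : q ≠ 0) (hspan : Submodule.span K (insert q S) = ⊤) :
    ∃ (M : Matrix n n K) (i₀ : n), M i₀ = q ∧ (∀ i ≠ i₀, M i ∈ S) ∧ M.det ≠ 0 := by
  obtain ⟨b, hbS, hqb, hSb, hb⟩ := exists_linearIndepOn_id_extension
    (LinearIndepOn.singleton (R := K) (v := id) hq) (Set.singleton_subset_iff.2 (S.mem_insert q))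
  have hbspan : ⊤ ≤ Submodule.span K (Set.range ((↑) : b → n → K)) := by
    rw [Subtype.range_coe, ← hspan]
    exact Submodule.span_le.2 hSb
  let e : n ≃ b := (Pi.basisFun K n).indexEquiv (Basis.mk hb hbspan)
  let M : Matrix n n K := fun i => e i
  have hM : LinearIndependent K M.row := LinearIndependent.comp hb e e.injective
  refine ⟨M, e.symm ⟨q, hqb rfl⟩, by simp [M], fun i hi => (hbS (e i).2).resolve_left fun h => ?_,
    ((isUnit_iff_isUnit_det _).1 (linearIndependent_rows_iff_isUnit.1 hM)).ne_zero⟩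
  exact hi (e.eq_symm_apply.2 (Subtype.ext h))

end LinearAlgebra

section Determinant

variable {n : Type*} [Fintype n] [DecidableEq n]

lemma one_le_abs_det_mul_prod {K : Type*} [Field K] [LinearOrder K] [IsStrictOrderedRing K]
    {M : Matrix n n K} {d : n → K} (hM : M.det ≠ 0) (hd : ∀ j, d j ≠ 0)
    (hintegral : ∀ i j, ∃ z : ℤ, M i j * d j = z) : 1 ≤ |M.det * ∏ j, d j| := by
  choose Z hZ using hintegral
  have hdet : M.det * ∏ j, d j = ((Matrix.of Z).det : K) := by
    rw [← det_diagonal, ← det_mul, Int.cast_det]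
    congr 1
    ext i j
    simp [mul_diagonal, hZ]
  have hne : (Matrix.of Z).det ≠ 0 := by
    intro h
    rw [h, Int.cast_zero] at hdet
    exact mul_ne_zero hM (prod_ne_zero_iff.2 fun j _ => hd j) hdet
  rw [hdet]
  exact_mod_cast Int.one_le_abs hne

-- Hadamard's inequality, squared so that it descends to `ℚ`. The determinant is read as the volume
-- form of an oriented Euclidean space, which is bounded by the product of the norms.
lemma det_sq_le_prod_sum_sq_real (M : Matrix n n ℝ) : M.det ^ 2 ≤ ∏ i, ∑ j, M i j ^ 2 := by
  let e := Fintype.equivFin n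
  let b := (EuclideanSpace.basisFun n ℝ).reindex e
  have : Fact (finrank ℝ (EuclideanSpace ℝ n) = Fintype.card n) := ⟨by simp⟩
  let v : Fin (Fintype.card n) → EuclideanSpace ℝ n := fun i => WithLp.toLp 2 (M (e.symm i))
  have hvol := b.toBasis.orientation.abs_volumeForm_apply_le v
  have hdet : b.toBasis.det v = M.det := by
    rw [Basis.det_apply, ← det_transpose, ← det_submatrix_equiv_self e.symm]
    congr 1
  rw [Orientation.volumeForm_robust' _ b, hdet] at hvol
  calc M.det ^ 2 = |M.det| ^ 2 := (sq_abs _).symm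
    _ ≤ (∏ i, ‖v i‖) ^ 2 := pow_le_pow_left₀ (abs_nonneg _) hvol 2
    _ = ∏ i, ∑ j, M i j ^ 2 := by
      simp [← prod_pow, EuclideanSpace.norm_sq_eq, v, e.symm.prod_comp fun i => ∑ j, M i j ^ 2]

lemma det_sq_le_prod_sum_sq (M : Matrix n n ℚ) : M.det ^ 2 ≤ ∏ i, ∑ j, M i j ^ 2 := by
  have h := det_sq_le_prod_sum_sq_real (M.map (↑))
  simp only [← Rat.cast_det, map_apply] at h
  exact_mod_cast h

lemma abs_adjugate_le {M : Matrix n n ℚ} {c : ℚ} (hc : 0 ≤ c) {i₀ : n}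
    (hM : ∀ i ≠ i₀, ∑ j, M i j ^ 2 ≤ c ^ 2) (t : n) :
    |M.adjugate t i₀| ≤ c ^ (Fintype.card n - 1) := by
  refine abs_le_of_sq_le_sq ?_ (pow_nonneg hc _)
  rw [adjugate_apply]
  calc _ ≤ ∏ i, ∑ j, M.updateRow i₀ (Pi.single t 1) i j ^ 2 := det_sq_le_prod_sum_sq _
    _ ≤ ∏ i, Function.update (fun _ => c ^ 2) i₀ 1 i := by
      refine prod_le_prod (fun i _ => sum_nonneg fun j _ => sq_nonneg _) fun i _ => ?_
      obtain rfl | hi := eq_or_ne i i₀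
      · simp [Pi.single_apply]
      · simpa [hi] using hM i hi
    _ = (c ^ (Fintype.card n - 1)) ^ 2 := by
      simp [prod_update_of_mem, card_sdiff, ← pow_mul, mul_comm]

lemma abs_det_mul_le_of_mulVec_eq_single {M : Matrix n n ℚ} {c a : ℚ} (hc : 0 ≤ c) {i₀ : n}
    (hM : ∀ i ≠ i₀, ∑ j, M i j ^ 2 ≤ c ^ 2) {w : n → ℚ} (hw : M *ᵥ w = Pi.single i₀ a) (t : n) :
    |M.det * w t| ≤ |a| * c ^ (Fintype.card n - 1) := by
  have hcramer : M.det * w t = M.adjugate t i₀ * a := by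
    have h := congrArg (fun x => (M.adjugate *ᵥ x) t) hw
    simpa [mulVec_mulVec, adjugate_mul, smul_mulVec] using h
  rw [hcramer, abs_mul, mul_comm]
  exact mul_le_mul_of_nonneg_left (abs_adjugate_le hc hM t) (abs_nonneg a)

end Determinant


section GeometricChains

variable {K : Type*} [Field K]

/-- The largest `l` such that `t / k, …, t / k ^ l` all lie in `V`. The value is meaningful only if
some `t / k ^ (i + 1)` is outside `V`, as it is for `t ≠ 0` and `1 < k`; otherwise it is `0`. -/
noncomputable def chainLength (V : Finset K) (k t : K) : ℕ := sInf {i | t / k ^ (i + 1) ∉ V}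

variable {V : Finset K} {k t t' x : K} {i j : ℕ}

lemma div_pow_mem_of_le_chainLength (ht : t ∈ V) (hi : i ≤ chainLength V k t) :
    t / k ^ i ∈ V := by
  cases i with
  | zero => simpa using ht
  | succ i => exact not_not.1 (Nat.notMem_of_lt_sInf hi)

section DecidableEq

variable [DecidableEq K]

/-- The maximal elements of the chains `t, t / k, t / k ^ 2, …` in `V`: those `t ∈ V` whose
predecessor `k * t` is not in `V`. -/
def chainTops (V : Finset K) (k : K) : Finset K := {t ∈ V | k * t ∉ V}

lemma eq_of_mem_chainTops_of_eq_div_pow (hk : k ≠ 0) (ht : t ∈ chainTops V k)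
    (ht' : t' ∈ chainTops V k) (hi : i ≤ chainLength V k t') (h : t = t' / k ^ i) :
    t = t' ∧ i = 0 := by
  cases i with
  | zero => simpa using h
  | succ i =>
    refine absurd ?_ (mem_filter.1 ht).2
    have hkt : k * t = t' / k ^ i := by rw [h, pow_succ]; field_simp
    rw [hkt]
    exact div_pow_mem_of_le_chainLength (mem_filter.1 ht').1 (by omega)

lemma eq_of_div_pow_eq_div_pow (hk : k ≠ 0) (ht : t ∈ chainTops V k) (ht' : t' ∈ chainTops V k)
    (hi : i ≤ chainLength V k t) (hj : j ≤ chainLength V k t') (h : t / k ^ i = t' / k ^ j) :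
    t = t' ∧ i = j := by
  wlog hij : i ≤ j generalizing t t' i j
  · exact (this ht' ht hj hi h.symm (by omega)).imp Eq.symm Eq.symm
  have htt : t = t' / k ^ (j - i) := by
    rw [pow_sub₀ k hk hij]
    field_simp at h ⊢
    exact h
  obtain ⟨rfl, h0⟩ := eq_of_mem_chainTops_of_eq_div_pow hk ht ht' (by omega) htt
  exact ⟨rfl, by omega⟩

lemma sum_chainLength_add_one_le_card (hk : k ≠ 0) :
    ∑ t ∈ chainTops V k, (chainLength V k t + 1) ≤ #V := by
  let f : (_ : K) × ℕ → K := fun p => p.1 / k ^ p.2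
  calc ∑ t ∈ chainTops V k, (chainLength V k t + 1)
      = #((chainTops V k).sigma fun t => range (chainLength V k t + 1)) := by simp
    _ ≤ #V := by
      refine card_le_card_of_injOn f (fun p hp => ?_) fun p hp p' hp' h => ?_
      · obtain ⟨hp1, hp2⟩ := mem_sigma.1 hp
        exact div_pow_mem_of_le_chainLength (mem_filter.1 hp1).1 (by simpa using hp2)
      · simp only [coe_sigma, Set.mem_sigma_iff, mem_coe, mem_range] at hp hp'
        obtain ⟨h1, h2⟩ := eq_of_div_pow_eq_div_pow hk hp.1 hp'.1 (by omega) (by omega) h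
        exact Sigma.ext h1 (heq_of_eq h2)

end DecidableEq

variable [LinearOrder K] [IsStrictOrderedRing K]

lemma le_chainLength (hk : 1 < k) (ht : t ≠ 0) (h : ∀ j < i, t / k ^ (j + 1) ∈ V) :
    i ≤ chainLength V k t := by
  have hinj : Function.Injective fun j : ℕ => t / k ^ (j + 1) := fun a b hab => by
    have hpow : k ^ (a + 1) = k ^ (b + 1) := by simpa [div_eq_mul_inv, ht] using hab
    simpa using pow_right_injective₀ (by linarith) hk.ne' hpow
  obtain ⟨_, ⟨j, rfl⟩, hj⟩ := (Set.infinite_range_of_injective hinj).exists_notMem_finset V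
  exact le_csInf ⟨j, hj⟩ fun b hb => not_lt.1 fun hbi => hb (h b hbi)

lemma exists_chainTops_div_pow_eq (hk : 1 < k) (hV : ∀ x ∈ V, 0 < x) (hx : x ∈ V) :
    ∃ t ∈ chainTops V k, ∃ i ≤ chainLength V k t, x = t / k ^ i := by
  classical
  have hk0 : k ≠ 0 := by positivity
  by_contra hbad
  obtain ⟨y, hy⟩ := Finset.exists_maximal (s := {y ∈ V |
    ¬ ∃ t ∈ chainTops V k, ∃ i ≤ chainLength V k t, y = t / k ^ i}) ⟨x, mem_filter.2 ⟨hx, hbad⟩⟩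
  obtain ⟨hyV, hybad⟩ := mem_filter.1 hy.prop
  have hyk : k * y ∈ V := by
    by_contra hky
    exact hybad ⟨y, mem_filter.2 ⟨hyV, hky⟩, 0, Nat.zero_le _, by simp⟩
  obtain ⟨t, ht, i, hi, hti⟩ : ∃ t ∈ chainTops V k, ∃ i ≤ chainLength V k t, k * y = t / k ^ i := by
    by_contra hkbad
    exact hy.not_gt (mem_filter.2 ⟨hyk, hkbad⟩) (lt_mul_of_one_lt_left (hV y hyV) hk)
  have hyt : y = t / k ^ (i + 1) := by
    rw [pow_succ, ← div_div, ← hti, mul_div_cancel_left₀ _ hk0]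
  have htV : t ∈ V := (mem_filter.1 ht).1
  refine hybad ⟨t, ht, i + 1, le_chainLength hk (hV t htV).ne' fun j hj => ?_, hyt⟩
  obtain rfl | hji := eq_or_ne j i
  · rwa [← hyt]
  · exact div_pow_mem_of_le_chainLength htV (by omega)

end GeometricChains

/-- A partition of the absolute values of the entries of `v` into maximal geometric progressions
`t, t / k, …, t / k ^ length t`, one for each `t` in `tops`: `|v i|` is the term of index `depth i`
in the progression of `top i`, and `abs_ne` says that no progression extends upwards. -/
structure ChainDecomposition {ι K : Type*} [Fintype ι] [Field K] [LinearOrder K]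
    (k : K) (v : ι → K) where
  tops : Finset K
  length : tops → ℕ
  top : ι → tops
  depth : ι → ℕ
  depth_le : ∀ i, depth i ≤ length (top i)
  abs_eq : ∀ i, |v i| = top i / k ^ depth i
  abs_ne : ∀ i (t : tops), |v i| ≠ k * t
  top_pos : ∀ t : tops, 0 < (t : K)
  top_surjective : Function.Surjective top
  sum_length_add_one_le : ∑ t, (length t + 1) ≤ Fintype.card ι

lemma ChainDecomposition.nonempty {ι K : Type*} [Fintype ι] [Field K] [LinearOrder K]
    [IsStrictOrderedRing K] {k : K} {v : ι → K} (hk : 1 < k) (hv : ∀ i, v i ≠ 0) :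
    Nonempty (ChainDecomposition k v) := by
  classical
  let V : Finset K := univ.image fun i => |v i|
  have hk0 : k ≠ 0 := by positivity
  have hmem (i) : |v i| ∈ V := mem_image_of_mem _ (mem_univ i)
  have hpos : ∀ x ∈ V, 0 < x := by simpa [V] using hv
  choose top htop depth hdepth heq using fun i => exists_chainTops_div_pow_eq hk hpos (hmem i)
  refine ⟨{
    tops := chainTops V k
    length := fun t => chainLength V k t
    top := fun i => ⟨top i, htop i⟩
    depth := depth
    depth_le := hdepth
    abs_eq := heq
    abs_ne := fun i t h => (mem_filter.1 t.2).2 (h ▸ hmem i)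
    top_pos := fun t => hpos t (mem_filter.1 t.2).1
    top_surjective := fun t => ?_
    sum_length_add_one_le := ?_ }⟩
  · obtain ⟨i, -, hi⟩ := mem_image.1 (mem_filter.1 t.2).1
    obtain ⟨hti, -⟩ := eq_of_mem_chainTops_of_eq_div_pow hk0 t.2 (htop i) (hdepth i) (hi ▸ heq i)
    exact ⟨i, Subtype.ext hti.symm⟩
  · rw [sum_coe_sort (chainTops V k) fun t => chainLength V k t + 1]
    exact (sum_chainLength_add_one_le_card hk0).trans card_image_le

section ShortRelations

variable {ι K : Type*} [Fintype ι] [Field K]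

/-- The integer relations `r` between the entries of `v` with `ℓ¹` norm at most `d`. -/
def shortRelations (v : ι → K) (d : ℕ) : Set (ι → ℤ) :=
  {r | ∑ i, (r i).natAbs ≤ d ∧ ∑ i, (r i : K) * v i = 0}

lemma eq_zero_of_abs_eq_of_shortRelations [LinearOrder K] [IsStrictOrderedRing K] {v z : ι → K}
    {d : ℕ} (hd : 2 ≤ d) (hz : ∀ r ∈ shortRelations v d, ∑ i, (r i : K) * z i = 0) {i j : ι}
    (hij : |v i| = |v j|) (hzj : z j = 0) : z i = 0 := by
  classical
  have hsum (e : ℤ) (w : ι → K) :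
      ∑ l, ((Pi.single i 1 + Pi.single j e : ι → ℤ) l : K) * w l = w i + e * w j := by
    simp [add_mul, sum_add_distrib, Pi.single_apply, ite_mul]
  have hnorm (e : ℤ) (he : e.natAbs = 1) :
      ∑ l, ((Pi.single i 1 + Pi.single j e : ι → ℤ) l).natAbs ≤ d := by
    calc ∑ l, ((Pi.single i 1 + Pi.single j e : ι → ℤ) l).natAbs
        ≤ ∑ l, ((Pi.single i 1 : ι → ℤ) l).natAbs + ∑ l, ((Pi.single j e : ι → ℤ) l).natAbs := by
          rw [← sum_add_distrib]
          exact sum_le_sum fun l _ => Int.natAbs_add_le _ _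
      _ ≤ d := by simpa [Pi.single_apply, apply_ite Int.natAbs, he] using hd
  obtain ⟨e, he, hve⟩ : ∃ e : ℤ, e.natAbs = 1 ∧ v i + e * v j = 0 := by
    obtain h | h := abs_eq_abs.1 hij
    · exact ⟨-1, rfl, by simp [h]⟩
    · exact ⟨1, rfl, by simp [h]⟩
  have hzi := hz (Pi.single i 1 + Pi.single j e) ⟨hnorm e he, by rw [hsum, hve]⟩
  rwa [hsum, hzj, mul_zero, add_zero] at hzi

end ShortRelations

section SignedSums

variable {ι K : Type*} [Field K] [LinearOrder K] [IsStrictOrderedRing K] {F : Finset ι} {r : ι → ℤ}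

lemma abs_sum_intCast_mul_le {s : ι → K} (hs : ∀ i ∈ F, |s i| ≤ 1) :
    |∑ i ∈ F, (r i : K) * s i| ≤ (∑ i ∈ F, (r i).natAbs : ℕ) := by
  push_cast
  refine (abs_sum_le_sum_abs _ _).trans (sum_le_sum fun i hi => ?_)
  rw [abs_mul, Nat.cast_natAbs, Int.cast_abs]
  exact mul_le_of_le_one_right (abs_nonneg _) (hs i hi)

lemma abs_sum_intCast_mul_eq_or_le {s : ι → K} {c : K} (hc : 0 ≤ c) (hc1 : c ≤ 1)
    (hs : ∀ i ∈ F, |s i| = 1 ∨ |s i| ≤ c) :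
    |∑ i ∈ F, (r i : K) * s i| = (∑ i ∈ F, (r i).natAbs : ℕ) ∨
      |∑ i ∈ F, (r i : K) * s i| ≤ (∑ i ∈ F, (r i).natAbs : ℕ) - 1 + c := by
  have hs1 : ∀ i ∈ F, |s i| ≤ 1 := fun i hi => (hs i hi).elim le_of_eq fun h => h.trans hc1
  by_cases hsmall : ∃ i ∈ F, r i ≠ 0 ∧ |s i| ≤ c
  · right
    obtain ⟨i, hi, hri, hsi⟩ := hsmall
    classical
    have hrest := abs_sum_intCast_mul_le (F := F.erase i) (r := r) fun j hj =>
      hs1 j (mem_of_mem_erase hj)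
    have hterm : |(r i : K) * s i| ≤ (r i).natAbs - 1 + c := by
      have h1 : (1 : K) ≤ |(r i : K)| := by exact_mod_cast Int.one_le_abs hri
      rw [abs_mul, Nat.cast_natAbs, Int.cast_abs]
      nlinarith [abs_nonneg (s i)]
    rw [← add_sum_erase F _ hi, ← add_sum_erase F _ hi]
    push_cast at hrest ⊢
    linarith [abs_add_le ((r i : K) * s i) (∑ j ∈ F.erase i, (r j : K) * s j)]
  · have hintegral (i) (hi : i ∈ F) : ∃ z : ℤ, (r i : K) * s i = z := by
      obtain h0 | h0 := eq_or_ne (r i) 0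
      · exact ⟨0, by simp [h0]⟩
      have hsi := (hs i hi).resolve_right fun h => hsmall ⟨i, hi, h0, h⟩
      obtain h | h := eq_or_eq_neg_of_abs_eq hsi
      · exact ⟨r i, by simp [h]⟩
      · exact ⟨-r i, by simp [h]⟩
    choose! z hz using hintegral
    have hsum : ∑ i ∈ F, (r i : K) * s i = (∑ i ∈ F, z i : ℤ) := by
      rw [Int.cast_sum]; exact sum_congr rfl hz
    have hle := abs_sum_intCast_mul_le (r := r) hs1
    rw [hsum] at hle ⊢
    generalize ∑ i ∈ F, (r i).natAbs = N at hle ⊢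
    generalize ∑ i ∈ F, z i = Z at hle ⊢
    obtain h | h := (show |Z| ≤ N by exact_mod_cast hle).eq_or_lt
    · exact .inl (by exact_mod_cast h)
    · have h1 : |(Z : K)| ≤ N - 1 := by exact_mod_cast Int.le_sub_one_of_lt h
      exact .inr (by linarith)

lemma exists_abs_sum_eq_of_sum_natAbs_le_one {v : ι → K} (hr : ∑ i ∈ F, (r i).natAbs ≤ 1)
    (hne : ∑ i ∈ F, (r i : K) * v i ≠ 0) :
    ∑ i ∈ F, (r i).natAbs = 1 ∧ ∃ i ∈ F, |∑ i ∈ F, (r i : K) * v i| = |v i| := by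
  classical
  obtain ⟨i, hi, hri⟩ := exists_ne_zero_of_sum_ne_zero hne
  have hri0 : r i ≠ 0 := fun h => hri (by simp [h])
  rw [← add_sum_erase F _ hi] at hr ⊢
  have hrest : ∑ j ∈ F.erase i, (r j).natAbs = 0 := by omega
  have hi1 : (r i).natAbs = 1 := by omega
  refine ⟨by omega, i, hi, ?_⟩
  have hzero : ∑ j ∈ F.erase i, (r j : K) * v j = 0 :=
    sum_eq_zero fun j hj => by simp [Int.natAbs_eq_zero.1 (sum_eq_zero_iff.1 hrest j hj)]
  have habs : |(r i : K)| = 1 := by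
    rw [← Int.cast_abs, ← Nat.cast_natAbs, hi1, Nat.cast_one]
  rw [← add_sum_erase F _ hi, hzero, add_zero, abs_mul, habs, one_mul]

end SignedSums

section SumSq

variable {α K : Type*} [Field K] [LinearOrder K] [IsStrictOrderedRing K] {F : Finset α} {p : α → K}
  {m : α → ℕ} {k : ℕ}

lemma sum_sq_le_sq_of_abs_le_natCast_of_lt (hp : ∀ t ∈ F, |p t| ≤ m t) (hm : ∑ t ∈ F, m t ≤ k + 1)
    (hlt : ∀ t ∈ F, m t < k) : ∑ t ∈ F, p t ^ 2 ≤ (k : K) ^ 2 := by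
  obtain rfl | ⟨t₀, ht₀⟩ := F.eq_empty_or_nonempty
  · simp
  have hk : (1 : K) ≤ k := by exact_mod_cast (Nat.zero_le _).trans_lt (hlt t₀ ht₀)
  calc ∑ t ∈ F, p t ^ 2 ≤ ∑ t ∈ F, (k - 1 : K) * m t := sum_le_sum fun t ht => by
        have hmk : (m t : K) ≤ k - 1 := le_sub_iff_add_le.2 (by exact_mod_cast hlt t ht)
        calc p t ^ 2 ≤ (m t : K) ^ 2 := sq_le_sq' (abs_le.1 (hp t ht)).1 (abs_le.1 (hp t ht)).2
          _ = m t * m t := sq _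
          _ ≤ (k - 1) * m t := mul_le_mul_of_nonneg_right hmk (Nat.cast_nonneg _)
    _ ≤ (k - 1) * (k + 1) := by
        rw [← mul_sum]
        exact mul_le_mul_of_nonneg_left (by exact_mod_cast hm) (by linarith)
    _ ≤ (k : K) ^ 2 := by linarith

lemma sum_sq_le_one_of_abs_le_natCast (hp : ∀ t ∈ F, |p t| ≤ m t) (hm : ∑ t ∈ F, m t ≤ 1) :
    ∑ t ∈ F, p t ^ 2 ≤ 1 :=
  calc ∑ t ∈ F, p t ^ 2 ≤ ∑ t ∈ F, (m t : K) ^ 2 :=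
        sum_le_sum fun t ht => sq_le_sq' (abs_le.1 (hp t ht)).1 (abs_le.1 (hp t ht)).2
    _ ≤ (∑ t ∈ F, (m t : K)) ^ 2 := sum_sq_le_sq_sum_of_nonneg fun t _ => Nat.cast_nonneg _
    _ ≤ 1 := pow_le_one₀ (by positivity) (by exact_mod_cast hm)

lemma sum_sq_le_sq_of_abs_le_natCast (hk : 2 ≤ k) (hp : ∀ t ∈ F, |p t| ≤ m t)
    (hm : ∑ t ∈ F, m t ≤ k + 1) (hbig : ∀ t ∈ F, k ≤ m t → |p t| ≤ k - 1 + (k : K)⁻¹) :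
    ∑ t ∈ F, p t ^ 2 ≤ (k : K) ^ 2 := by
  by_cases hlt : ∀ t ∈ F, m t < k
  · exact sum_sq_le_sq_of_abs_le_natCast_of_lt hp hm hlt
  classical
  push Not at hlt
  obtain ⟨t, ht, htk⟩ := hlt
  rw [← add_sum_erase F _ ht] at hm ⊢
  have hrest : ∑ s ∈ F.erase t, p s ^ 2 ≤ 1 :=
    sum_sq_le_one_of_abs_le_natCast (fun s hs => hp s (mem_of_mem_erase hs)) (by omega)
  have hk2 : (2 : K) ≤ k := by exact_mod_cast hk
  have hinv : (k : K) * (k : K)⁻¹ = 1 := mul_inv_cancel₀ (by positivity)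
  have hmargin : (k - 1 + (k : K)⁻¹) ^ 2 + 1 ≤ (k : K) ^ 2 := by nlinarith
  have hsq : p t ^ 2 ≤ (k - 1 + (k : K)⁻¹) ^ 2 :=
    sq_le_sq' (abs_le.1 (hbig t ht htk)).1 (abs_le.1 (hbig t ht htk)).2
  linarith

end SumSq

namespace ChainDecomposition

section Coeff

variable {ι K : Type*} [Fintype ι] [Field K] [LinearOrder K] {k : K} {v : ι → K}

/-- The ratio of `v i` to the top of its chain, a signed power of `k⁻¹`. -/
def coeff (D : ChainDecomposition k v) (i : ι) : K := v i / D.top i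

variable (D : ChainDecomposition k v)

lemma coeff_mul_top (i : ι) : D.coeff i * D.top i = v i :=
  div_mul_cancel₀ _ (D.top_pos _).ne'

/-- The coefficients, one for each chain, of the relation between the tops of the chains obtained
from `r` by writing `v i` as `D.coeff i` times the top of its chain. -/
def collapse (r : ι → ℤ) (t : D.tops) : K := ∑ i with D.top i = t, (r i : K) * D.coeff i

lemma sum_collapse_mul (r : ι → ℤ) (z : D.tops → K) :
    ∑ t, D.collapse r t * z t = ∑ i, (r i : K) * (D.coeff i * z (D.top i)) := by
  rw [← sum_fiberwise univ D.top]
  refine sum_congr rfl fun t _ => ?_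
  rw [collapse, sum_mul]
  refine sum_congr rfl fun i hi => ?_
  rw [(mem_filter.1 hi).2, mul_assoc]

lemma sum_collapse_mul_top (r : ι → ℤ) :
    ∑ t, D.collapse r t * (t : K) = ∑ i, (r i : K) * v i := by
  simp only [D.sum_collapse_mul, D.coeff_mul_top]

lemma collapse_single [DecidableEq ι] (j : ι) :
    D.collapse (Pi.single j 1) = Pi.single (D.top j) (D.coeff j) := by
  ext t
  simp [collapse, Pi.single_apply, ite_mul, eq_comm]

/-- The part of the `ℓ¹` norm of `r` carried by the chain with top `t`. -/
def fiberMass (r : ι → ℤ) (t : D.tops) : ℕ := ∑ i with D.top i = t, (r i).natAbs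

lemma sum_fiberMass (r : ι → ℤ) : ∑ t, D.fiberMass r t = ∑ i, (r i).natAbs :=
  sum_fiberwise univ D.top _

variable [IsStrictOrderedRing K]

lemma abs_coeff (i : ι) : |D.coeff i| = (k ^ D.depth i)⁻¹ := by
  have h := D.top_pos (D.top i)
  rw [coeff, abs_div, D.abs_eq, abs_of_pos h]
  field_simp

lemma coeff_ne_zero (hk : k ≠ 0) (i : ι) : D.coeff i ≠ 0 := by
  rw [← abs_ne_zero, abs_coeff]
  exact inv_ne_zero (pow_ne_zero _ hk)

lemma abs_coeff_eq_one_or_le (hk : 1 ≤ k) (i : ι) : |D.coeff i| = 1 ∨ |D.coeff i| ≤ k⁻¹ := by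
  rw [abs_coeff]
  obtain h | h := Nat.eq_zero_or_pos (D.depth i)
  · exact .inl (by simp [h])
  · exact .inr (inv_anti₀ (by positivity) (le_self_pow₀ hk h.ne'))

lemma exists_intCast_eq_coeff_mul {k : ℕ} (hk : k ≠ 0) (D : ChainDecomposition (k : K) v) (i : ι) :
    ∃ z : ℤ, D.coeff i * (k : K) ^ D.length (D.top i) = z := by
  have hk0 : (k : K) ≠ 0 := Nat.cast_ne_zero.2 hk
  have h : (k ^ D.depth i : K)⁻¹ * (k : K) ^ D.length (D.top i) =
      (k ^ (D.length (D.top i) - D.depth i) : ℤ) := by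
    rw [Int.cast_pow, Int.cast_natCast, pow_sub₀ _ hk0 (D.depth_le i), mul_comm]
  obtain hc | hc := eq_or_eq_neg_of_abs_eq (D.abs_coeff i)
  · exact ⟨_, by rw [hc, h]⟩
  · exact ⟨_, by rw [hc, neg_mul, h, Int.cast_neg]⟩

lemma exists_intCast_eq_collapse_mul {k : ℕ} (hk : k ≠ 0) (D : ChainDecomposition (k : K) v)
    (r : ι → ℤ) (t : D.tops) : ∃ z : ℤ, D.collapse r t * (k : K) ^ D.length t = z := by
  choose c hc using D.exists_intCast_eq_coeff_mul hk
  refine ⟨∑ i with D.top i = t, r i * c i, ?_⟩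
  rw [collapse, sum_mul, Int.cast_sum]
  refine sum_congr rfl fun i hi => ?_
  rw [Int.cast_mul, ← hc i, (mem_filter.1 hi).2, mul_assoc]

lemma abs_collapse_le_fiberMass (hk : 1 ≤ k) (r : ι → ℤ) (t : D.tops) :
    |D.collapse r t| ≤ D.fiberMass r t :=
  abs_sum_intCast_mul_le fun i _ =>
    (D.abs_coeff_eq_one_or_le hk i).elim le_of_eq fun h => h.trans (inv_le_one_of_one_le₀ hk)

end Coeff

section ShortRelations

variable {ι K : Type*} [Fintype ι] [Field K] [LinearOrder K] [IsStrictOrderedRing K] {k : ℕ}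
  {v : ι → K} (D : ChainDecomposition (k : K) v) {r : ι → ℤ}

-- A coefficient `±k` could only come from a relation `k * t = ±v i`, but `t` is a top.
lemma fiberMass_eq_and_abs_collapse_ne (hr : r ∈ shortRelations v (k + 1)) {t : D.tops}
    (hm : k ≤ D.fiberMass r t) (hp : D.collapse r t ≠ 0) :
    D.fiberMass r t = k ∧ |D.collapse r t| ≠ k := by
  classical
  have hnorm : D.fiberMass r t + ∑ i with D.top i ≠ t, (r i).natAbs ≤ k + 1 := by
    rw [fiberMass, sum_filter_add_sum_filter_not]
    exact hr.1
  have hrel : D.collapse r t * t + ∑ i with D.top i ≠ t, (r i : K) * v i = 0 := by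
    rw [← hr.2, ← sum_filter_add_sum_filter_not univ fun i => D.top i = t, collapse, sum_mul]
    congr 1
    refine sum_congr rfl fun i hi => ?_
    rw [← D.coeff_mul_top i, (mem_filter.1 hi).2, mul_assoc]
  have hoff : ∑ i with D.top i ≠ t, (r i : K) * v i = -(D.collapse r t * t) :=
    eq_neg_of_add_eq_zero_right hrel
  have ht := D.top_pos t
  obtain ⟨hone, i, -, hi⟩ := exists_abs_sum_eq_of_sum_natAbs_le_one (by omega)
    (hoff ▸ neg_ne_zero.2 (mul_ne_zero hp ht.ne'))
  refine ⟨by omega, fun habs => D.abs_ne i t ?_⟩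
  rw [← hi, hoff, abs_neg, abs_mul, habs, abs_of_pos ht]

lemma abs_collapse_le_of_le_fiberMass (hk : 1 ≤ k) (hr : r ∈ shortRelations v (k + 1))
    {t : D.tops} (hm : k ≤ D.fiberMass r t) : |D.collapse r t| ≤ k - 1 + (k : K)⁻¹ := by
  have hk1 : (1 : K) ≤ k := by exact_mod_cast hk
  have hkinv : (0 : K) ≤ (k : K)⁻¹ := by positivity
  by_cases hp : D.collapse r t = 0
  · rw [hp, abs_zero]
    linarith
  obtain ⟨hmass, hne⟩ := D.fiberMass_eq_and_abs_collapse_ne hr hm hp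
  have h := abs_sum_intCast_mul_eq_or_le (F := {i | D.top i = t}) (r := r) hkinv
    (inv_le_one_of_one_le₀ hk1) fun i _ => D.abs_coeff_eq_one_or_le hk1 i
  rw [← collapse, ← fiberMass, hmass] at h
  exact h.resolve_left hne

lemma sum_sq_collapse_le (hk : 2 ≤ k) (hr : r ∈ shortRelations v (k + 1)) :
    ∑ t, D.collapse r t ^ 2 ≤ (k : K) ^ 2 :=
  sum_sq_le_sq_of_abs_le_natCast hk
    (fun t _ => D.abs_collapse_le_fiberMass (by norm_cast; omega) r t)
    ((D.sum_fiberMass r).trans_le hr.1)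
    fun _ _ ht => D.abs_collapse_le_of_le_fiberMass (by omega) hr ht

end ShortRelations

lemma span_insert_collapse_eq_top {ι K : Type*} [Fintype ι] [DecidableEq ι] [Field K]
    [LinearOrder K] [IsStrictOrderedRing K] {k : K} {v : ι → K} (D : ChainDecomposition k v)
    (hk : k ≠ 0) {S : Set (ι → ℤ)} {j₀ : ι}
    (huniq : ∀ z : ι → K, (∀ r ∈ S, ∑ i, (r i : K) * z i = 0) → z j₀ = 0 → z = 0) :
    Submodule.span K (insert (D.collapse (Pi.single j₀ 1)) (D.collapse '' S)) = ⊤ := by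
  refine span_eq_top_of_forall_dotProduct_eq_zero fun z hz => ?_
  have hlift := huniq (fun i => D.coeff i * z (D.top i)) (fun r hr => ?_) ?_
  · ext t
    obtain ⟨i, rfl⟩ := D.top_surjective t
    exact (mul_eq_zero.1 (congrFun hlift i)).resolve_left (D.coeff_ne_zero hk i)
  · rw [← D.sum_collapse_mul, ← hz _ (.inr ⟨r, hr, rfl⟩), dotProduct_comm, dotProduct]
  · have h := hz _ (.inl rfl)
    rwa [D.collapse_single, dotProduct_single, mul_comm] at h

lemma exists_det_collapse_ne_zero {ι K : Type*} [Fintype ι] [DecidableEq ι] [Field K]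
    [LinearOrder K] [IsStrictOrderedRing K] {k : K} {v : ι → K} (D : ChainDecomposition k v)
    (hk : k ≠ 0) {S : Set (ι → ℤ)} {j₀ : ι}
    (huniq : ∀ z : ι → K, (∀ r ∈ S, ∑ i, (r i : K) * z i = 0) → z j₀ = 0 → z = 0) :
    ∃ (R : D.tops → ι → ℤ) (t₀ : D.tops), R t₀ = Pi.single j₀ 1 ∧ (∀ t ≠ t₀, R t ∈ S) ∧
      (Matrix.of fun t => D.collapse (R t)).det ≠ 0 := by
  have hq : D.collapse (Pi.single j₀ 1) ≠ 0 := by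
    rw [D.collapse_single, Ne, Pi.single_eq_zero_iff]
    exact D.coeff_ne_zero hk j₀
  obtain ⟨M, t₀, hMt₀, hM, hdet⟩ :=
    exists_det_ne_zero_of_span_insert_eq_top hq (D.span_insert_collapse_eq_top hk huniq)
  choose! R hRS hRM using hM
  refine ⟨Function.update R t₀ (Pi.single j₀ 1), t₀, Function.update_self .., fun t ht => ?_, ?_⟩
  · rw [Function.update_of_ne ht]
    exact hRS t ht
  · convert hdet using 2
    funext t
    change D.collapse _ = M t
    obtain rfl | ht := eq_or_ne t t₀
    · rw [Function.update_self, hMt₀]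
    · rw [Function.update_of_ne ht, hRM t ht]

lemma card_sub_one_add_sum_length_le {ι K : Type*} [Fintype ι] [Field K] [LinearOrder K] {k : K}
    {v : ι → K} (D : ChainDecomposition k v) [Nonempty D.tops] :
    Fintype.card D.tops - 1 + ∑ t, D.length t ≤ Fintype.card ι - 1 := by
  have h := D.sum_length_add_one_le
  have hpos : 0 < Fintype.card D.tops := Fintype.card_pos
  rw [sum_add_distrib, sum_const, card_univ, smul_eq_mul, mul_one] at h
  omega

lemma top_le {ι : Type*} [Fintype ι] {k : ℕ} {v : ι → ℚ} {j₀ : ι}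
    (D : ChainDecomposition (k : ℚ) v) (hk : 2 ≤ k)
    (huniq : ∀ z : ι → ℚ, (∀ r ∈ shortRelations v (k + 1), ∑ i, (r i : ℚ) * z i = 0) →
      z j₀ = 0 → z = 0) (t : D.tops) :
    (t : ℚ) ≤ |v j₀| * (k : ℚ) ^ (Fintype.card ι - 1) := by
  classical
  have hk0 : (k : ℚ) ≠ 0 := by positivity
  obtain ⟨R, t₀, hRt₀, hR, hdet⟩ := D.exists_det_collapse_ne_zero hk0 huniq
  set M : Matrix D.tops D.tops ℚ := Matrix.of fun t => D.collapse (R t)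
  have hMv : (M *ᵥ fun s => (s : ℚ)) = Pi.single t₀ (v j₀) := by
    ext s
    refine (D.sum_collapse_mul_top (R s)).trans ?_
    obtain rfl | hs := eq_or_ne s t₀
    · simp [hRt₀, Pi.single_apply]
    · rw [Pi.single_eq_of_ne hs, (hR s hs).2]
  have hintegral : 1 ≤ |M.det * ∏ s, (k : ℚ) ^ D.length s| :=
    one_le_abs_det_mul_prod hdet (fun s => pow_ne_zero _ hk0) fun s =>
      D.exists_intCast_eq_collapse_mul (by omega) (R s)
  have hcramer : |M.det * t| ≤ |v j₀| * (k : ℚ) ^ (Fintype.card D.tops - 1) :=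
    abs_det_mul_le_of_mulVec_eq_single (Nat.cast_nonneg k)
      (fun s hs => D.sum_sq_collapse_le hk (hR s hs)) hMv t
  rw [prod_pow_eq_pow_sum, abs_mul, abs_of_nonneg (by positivity : (0 : ℚ) ≤ k ^ _)] at hintegral
  calc (t : ℚ) ≤ t * (|M.det| * k ^ ∑ s, D.length s) :=
        le_mul_of_one_le_right (D.top_pos t).le hintegral
    _ = |M.det * t| * k ^ ∑ s, D.length s := by rw [abs_mul, abs_of_pos (D.top_pos t)]; ring
    _ ≤ |v j₀| * k ^ (Fintype.card D.tops - 1) * k ^ ∑ s, D.length s := by gcongr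
    _ = |v j₀| * k ^ (Fintype.card D.tops - 1 + ∑ s, D.length s) := by rw [mul_assoc, ← pow_add]
    _ ≤ |v j₀| * k ^ (Fintype.card ι - 1) := by
        have : Nonempty D.tops := ⟨t⟩
        gcongr
        · norm_cast
          omega
        · exact D.card_sub_one_add_sum_length_le

end ChainDecomposition

section System

lemma abs_le_pow_card_sub_one_of_shortRelations {ι : Type*} [Fintype ι] {k : ℕ} (hk : 2 ≤ k)
    {v : ι → ℚ} (hv : ∀ i, v i ≠ 0)
    (huniq : ∀ z : ι → ℚ, (∀ r ∈ shortRelations v (k + 1), ∑ i, (r i : ℚ) * z i = 0) →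
      (∀ i, |v i| = 1 → z i = 0) → z = 0) (j : ι) :
    |v j| ≤ (k : ℚ) ^ (Fintype.card ι - 1) := by
  classical
  obtain ⟨j₀, hj₀⟩ : ∃ j₀, |v j₀| = 1 := by
    by_contra! hne
    exact hv j (congrFun (huniq v (fun r hr => hr.2) fun i hi => absurd hi (hne i)) j)
  have hk1 : (1 : ℚ) < k := by exact_mod_cast hk
  obtain ⟨D⟩ := ChainDecomposition.nonempty hk1 hv
  calc |v j| = D.top j / (k : ℚ) ^ D.depth j := D.abs_eq j
    _ ≤ D.top j := div_le_self (D.top_pos _).le (one_le_pow₀ hk1.le)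
    _ ≤ |v j₀| * (k : ℚ) ^ (Fintype.card ι - 1) :=
        D.top_le hk (fun z hz hz₀ => huniq z hz fun i hi =>
          eq_zero_of_abs_eq_of_shortRelations (by omega) hz (hi.trans hj₀.symm) hz₀) _
    _ = (k : ℚ) ^ (Fintype.card ι - 1) := by rw [hj₀, one_mul]

variable {m n : Type*} [Fintype n] [DecidableEq n] {k : ℕ} {A : Matrix m n ℤ} {b : m → ℤ}

lemma abs_le_pow_rank_sub_one_of_linearIndepOn_support (hk : 2 ≤ k)
    (hrows : ∀ i, ((∃ j, ∀ j', A i j' = if j' = j then 1 else 0) ∧ (b i = 1 ∨ b i = -1)) ∨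
      (∑ j, (A i j).natAbs ≤ k + 1 ∧ b i = 0))
    {y : n → ℚ} (hy : A.map (Int.cast : ℤ → ℚ) *ᵥ y = fun i => (b i : ℚ))
    (hind : LinearIndepOn ℚ (A.map (Int.cast : ℤ → ℚ)).col (Function.support y)) (j : n) :
    |y j| ≤ (k : ℚ) ^ ((A.map (Int.cast : ℤ → ℚ)).rank - 1) := by
  classical
  by_cases hj : y j = 0
  · rw [hj, abs_zero]
    positivity
  have hk1 : (1 : ℚ) ≤ k := by exact_mod_cast (by omega : 1 ≤ k)
  refine (abs_le_pow_card_sub_one_of_shortRelations hk (v := fun l : Function.support y => y l)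
    (fun l => l.2) (fun z hz hz₁ => ?_) ⟨j, hj⟩).trans
    (pow_le_pow_right₀ hk1 (Nat.sub_le_sub_right (card_le_rank_of_linearIndepOn_col hind) 1))
  refine mulVec_injective_iff.2 hind ((funext fun i => ?_).trans (mulVec_zero _).symm)
  have hrow : ∑ l, (A i l : ℚ) * y l = b i := congrFun hy i
  change ∑ l : Function.support y, (A i l : ℚ) * z l = 0
  obtain ⟨⟨l₀, hl₀⟩, hbi⟩ | ⟨hnorm, hbi⟩ := hrows i
  · have hyl₀ : y l₀ = b i := by simpa [hl₀] using hrow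
    refine sum_eq_zero fun l _ => ?_
    obtain hl | hl := eq_or_ne (l : n) l₀
    · rw [hz₁ l, mul_zero]
      obtain h | h := hbi <;> simp [hl, hyl₀, h]
    · rw [hl₀, if_neg hl, Int.cast_zero, zero_mul]
  · refine hz (fun l => A i l) ⟨?_, ?_⟩
    · rw [sum_set_coe (Function.support y) (f := fun l => (A i l).natAbs)]
      exact (sum_le_sum_of_subset (subset_univ _)).trans hnorm
    · rw [← sum_congr_set (Function.support y) (fun l => (A i l : ℚ) * y l) _ (fun _ _ => rfl)
        fun l hl => by rw [Function.notMem_support.1 hl, mul_zero], hrow, hbi, Int.cast_zero]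

end System

theorem stmt3_general {m n L : Type*} [Fintype n] [DecidableEq n] [Field L] [CharZero L]
    (k : ℕ) (hk : 2 ≤ k) (A : Matrix m n ℤ) (b : m → ℤ)
    (hrows : ∀ i, ((∃ j, ∀ j', A i j' = if j' = j then 1 else 0) ∧ (b i = 1 ∨ b i = -1)) ∨
      (∑ j, (A i j).natAbs ≤ k + 1 ∧ b i = 0))
    (hsol : ∃ x : n → L, A.map (Int.cast : ℤ → L) *ᵥ x = fun i => (b i : L)) :
    ∃ x : n → ℚ, A.map (Int.cast : ℤ → ℚ) *ᵥ x = (fun i => (b i : ℚ)) ∧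
      ∀ j, |x j| ≤ (k : ℚ) ^ ((A.map (Int.cast : ℤ → ℚ)).rank - 1) := by
  obtain ⟨x, hx⟩ := hsol
  obtain ⟨y, hy⟩ : ∃ y : n → ℚ, A.map (Int.cast : ℤ → ℚ) *ᵥ y = fun i => (b i : ℚ) :=
    exists_mulVec_eq_of_map_algebraMap (x := x) (by
      ext i
      simpa [mulVec, dotProduct] using congrFun hx i)
  obtain ⟨w, hw, hind⟩ := exists_mulVec_eq_linearIndepOn_support (A.map (Int.cast : ℤ → ℚ)) y
  exact ⟨w, hw.trans hy,
    abs_le_pow_rank_sub_one_of_linearIndepOn_support hk hrows (hw.trans hy) hind⟩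

theorem stmt3 {m N : ℕ} (k : ℕ) (hk : 2 ≤ k)
    (A : Matrix (Fin m) (Fin N) ℤ) (b : Fin m → ℤ)
    (hrows : ∀ i : Fin m,
      ((∃ j : Fin N, (∀ j' : Fin N, A i j' = if j' = j then 1 else 0)) ∧
        (b i = 1 ∨ b i = -1)) ∨
      ((∑ j, (A i j).natAbs) ≤ k + 1 ∧ b i = 0))
    (hrank : 1 ≤ (A.map (Int.cast : ℤ → ℚ)).rank)
    (hsol : ∃ x : Fin N → ℝ,
      (A.map (Int.cast : ℤ → ℝ)).mulVec x = fun i => (b i : ℝ)) :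
    ∃ x : Fin N → ℚ,
      (A.map (Int.cast : ℤ → ℚ)).mulVec x = (fun i => (b i : ℚ)) ∧
      ∀ j, |x j| ≤ (k : ℚ) ^ ((A.map (Int.cast : ℤ → ℚ)).rank - 1) :=
  stmt3_general k hk A b hrows hsol
end

section
/- Let n ≥ 2 and consider a finite system of linear equations in the variables x_1, …, x_n, in which every equation is of one of the two forms x_i + x_j = x_k (with i, j, k ∈ {1,…,n}, not necessarily distinct) or x_l = 1 (with l ∈ {1,…,n}). If the system has a real solution, then it has a rational solution (x_1,…,x_n) ∈ ℚ^n with |x_i| ≤ 2^{n−1} for all 1 ≤ i ≤ n. -/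
/-!
If some `x l = 1` occurs, rewrite every other `x k = 1` as `x k - x l = 0`. The system is then
homogeneous with integer rows, and `x l` is nonzero at some solution, so the unit row `l` is not in
the span of the system's rows. Complete it, by rows of the system and then by unit rows, to a basis.
The coordinates of the unit vectors along the unit row `l` solve the system, and by Cramer's rule
they are quotients of integer determinants, hence bounded by their numerators. Such a numerator has
one unit row, and each other row is a sum `e_i + (e_j - e_k)` of two rows of a reduced incidence
matrix of a directed graph. Expanding by multilinearity gives `2 ^ (n - 1)` determinants, each in
`{-1, 0, 1}` because incidence matrices are totally unimodular.
-/

open Matrix Module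

section IncidenceRows

variable {σ τ R : Type*} [DecidableEq σ]

/-- A row of the reduced incidence matrix of a directed graph on the vertices `Option σ`, whose
columns are the vertices other than `none`: the difference of the indicators of the two ends of an
edge. Loops are allowed, so zero is an incidence row. -/
def IsIncidenceRow [Ring R] (v : σ → R) : Prop :=
  ∃ p q : Option σ, ∀ j, v j = (if p = some j then 1 else 0) - (if q = some j then 1 else 0)

theorem isIncidenceRow_zero [Ring R] : IsIncidenceRow (0 : σ → R) :=
  ⟨none, none, by simp⟩

theorem isIncidenceRow_single [Ring R] (i : σ) : IsIncidenceRow (Pi.single i 1 : σ → R) :=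
  ⟨some i, none, by simp [Pi.single_apply, eq_comm]⟩

theorem isIncidenceRow_single_sub_single [Ring R] (i j : σ) :
    IsIncidenceRow (Pi.single i 1 - Pi.single j 1 : σ → R) :=
  ⟨some i, some j, by simp [Pi.single_apply, eq_comm]⟩

theorem IsIncidenceRow.comp_injective [DecidableEq τ] [Ring R] {v : σ → R}
    (hv : IsIncidenceRow v) {f : τ → σ} (hf : f.Injective) : IsIncidenceRow (v ∘ f) := by
  obtain ⟨p, q, h⟩ := hv
  refine ⟨p.bind (Function.partialInv f), q.bind (Function.partialInv f), fun j => ?_⟩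
  simp [h, Option.bind_eq_some_iff, hf.isPartialInv _ _]

theorem IsIncidenceRow.eq_single_of_sum_ne_zero [Fintype σ] [Ring R] {v : σ → R}
    (hv : IsIncidenceRow v) (hsum : ∑ j, v j ≠ 0) :
    ∃ (j : σ) (ε : SignType), v = Pi.single j (ε : R) := by
  obtain ⟨p, q, h⟩ := hv
  rcases p with _ | i <;> rcases q with _ | j
  · simp [h] at hsum
  · exact ⟨j, -1, by ext k; rcases eq_or_ne j k with rfl | hjk <;> simp [*, Ne.symm]⟩
  · exact ⟨i, 1, by ext; simp [h, Pi.single_apply, eq_comm]⟩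
  · simp [h, Finset.sum_sub_distrib] at hsum

theorem det_mem_range_signType_of_isIncidenceRow [CommRing R] {k : ℕ}
    (B : Matrix (Fin k) (Fin k) R) (hB : ∀ i, IsIncidenceRow (B i)) :
    B.det ∈ Set.range SignType.cast := by
  induction k with
  | zero => exact ⟨1, by simp⟩
  | succ k ih =>
    by_cases hsum : ∀ i, ∑ j, B i j = 0
    · have hker : B *ᵥ 1 = 0 := by
        ext i
        simp [mulVec, dotProduct, hsum i]
      have hdet : B.det = 0 :=
        det_eq_zero_of_mulVec_eq_zero_of_mem_nonZeroDivisors hker (i := 0) (one_mem _)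
      exact ⟨0, by simp [hdet]⟩
    · obtain ⟨i, hi⟩ := not_forall.mp hsum
      obtain ⟨j, ε, hrow⟩ := (hB i).eq_single_of_sum_ne_zero hi
      have hdet : B.det = (-1) ^ (i + j : ℕ) * ε * (B.submatrix i.succAbove j.succAbove).det := by
        rw [det_succ_row B i, Finset.sum_eq_single j (fun j' _ hj' => by simp [hrow, hj'])
          (by simp), hrow, Pi.single_eq_same]
      obtain ⟨δ, hδ⟩ := ih (B.submatrix i.succAbove j.succAbove)
        fun r => (hB _).comp_injective Fin.succAbove_right_injective
      exact ⟨(-1) ^ (i + j : ℕ) * ε * δ, by simp [hdet, ← hδ]⟩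

theorem isTotallyUnimodular_of_isIncidenceRow [CommRing R] {A : Matrix τ σ R}
    (hA : ∀ i, IsIncidenceRow (A i)) : A.IsTotallyUnimodular :=
  fun _ _ _ _ hg => det_mem_range_signType_of_isIncidenceRow _ fun _ => (hA _).comp_injective hg

variable [Fintype σ] [CommRing R] [LinearOrder R] [IsOrderedRing R]

theorem abs_det_le_one_of_isIncidenceRow {A : Matrix σ σ R} (hA : ∀ i, IsIncidenceRow (A i)) :
    |A.det| ≤ 1 := by
  obtain ⟨ε, hε⟩ := (isTotallyUnimodular_iff_fintype A).mp
    (isTotallyUnimodular_of_isIncidenceRow hA) σ id id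
  rw [submatrix_id_id] at hε
  rw [← hε]
  cases ε <;> simp

theorem abs_det_le_prod_of_sum_isIncidenceRow {M : Matrix σ σ R} (c : σ → ℕ)
    (hM : ∀ i, ∃ g : Fin (c i) → σ → R, (∀ a, IsIncidenceRow (g a)) ∧ ∑ a, g a = M i) :
    |M.det| ≤ ∏ i, (c i : R) := by
  choose g hg hsum using hM
  calc |M.det| = |∑ r : ∀ i, Fin (c i), det fun i => g i (r i)| := by
        have hexpand := (detRowAlternating (n := σ) (R := R)).toMultilinearMap.map_sum g
        simp only [hsum] at hexpand
        exact congrArg abs hexpand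
    _ ≤ ∑ r : ∀ i, Fin (c i), |det fun i => g i (r i)| := Finset.abs_sum_le_sum_abs _ _
    _ ≤ ∑ _r : ∀ i, Fin (c i), (1 : R) :=
        Finset.sum_le_sum fun r _ => abs_det_le_one_of_isIncidenceRow fun i => hg i (r i)
    _ = ∏ i, (c i : R) := by simp

theorem abs_det_le_two_pow_of_add_isIncidenceRow {M : Matrix σ σ R} (s : σ)
    (hs : IsIncidenceRow (M s))
    (hM : ∀ i ≠ s, ∃ u w, IsIncidenceRow u ∧ IsIncidenceRow w ∧ u + w = M i) :
    |M.det| ≤ 2 ^ (Fintype.card σ - 1) := by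
  let c : σ → ℕ := Function.update (fun _ => 2) s 1
  have hc : ∏ i, (c i : R) = 2 ^ (Fintype.card σ - 1) := by
    rw [← Nat.cast_prod, Finset.prod_update_of_mem (Finset.mem_univ s)]
    simp [Finset.card_sdiff]
  rw [← hc]
  refine abs_det_le_prod_of_sum_isIncidenceRow c fun i => ?_
  by_cases hi : i = s
  · subst hi
    rw [show c i = 1 from Function.update_self ..]
    exact ⟨fun _ => M i, fun _ => hs, by simp⟩
  · obtain ⟨u, w, hu, hw, huw⟩ := hM i hi
    rw [show c i = 2 from Function.update_of_ne hi ..]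
    exact ⟨![u, w], Fin.forall_fin_two.mpr ⟨hu, hw⟩, by simpa using huw⟩

end IncidenceRows

section SmallSolutions

theorem exists_basis_of_linearIndepOn {κ K V : Type*} [DivisionRing K] [AddCommGroup V] [Module K V]
    (c : Basis κ K V) {t : Set V} (ht : LinearIndepOn K id t) :
    ∃ b : Basis κ K V, t ⊆ Set.range b ∧ Set.range b ⊆ t ∪ Set.range c := by
  obtain ⟨B, hBsub, htB, hspanB, hB⟩ :=
    exists_linearIndepOn_id_extension ht (Set.subset_union_left (t := Set.range c))
  have htop : ⊤ ≤ Submodule.span K (Set.range ((↑) : B → V)) := by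
    rw [Subtype.range_coe, ← c.span_eq, Submodule.span_le]
    exact Set.subset_union_right.trans hspanB
  let b : Basis B K V := Basis.mk hB htop
  have hrange : Set.range (b.reindex (b.indexEquiv c)) = B := by simp [b]
  exact ⟨b.reindex (b.indexEquiv c), htB.trans_eq hrange.symm, hrange.trans_subset hBsub⟩

theorem exists_basis_coord_eq_zero {κ K V : Type*} [DivisionRing K] [AddCommGroup V] [Module K V]
    (c : Basis κ K V) {A : Set V} {v : V} (hv : v ∉ Submodule.span K A) :
    ∃ (b : Basis κ K V) (s : κ), b s = v ∧ (∀ q ≠ s, b q ∈ A ∪ Set.range c) ∧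
      ∀ a ∈ A, b.coord s a = 0 := by
  obtain ⟨A', hA'A, hspan, hA'⟩ := exists_linearIndependent K A
  rw [← hspan] at hv
  obtain ⟨b, hsub, hrange⟩ := exists_basis_of_linearIndepOn c (LinearIndepOn.id_insert hA' hv)
  obtain ⟨s, rfl⟩ := hsub (Set.mem_insert v A')
  refine ⟨b, s, rfl, fun q hq => ?_, fun a ha => ?_⟩
  · rcases hrange (Set.mem_range_self q) with (hqs | hqA) | hqc
    · exact absurd (b.injective hqs) hq
    · exact Or.inl (hA'A hqA)
    · exact Or.inr hqc
  · have hle : Submodule.span K A' ≤ LinearMap.ker (b.coord s) := by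
      refine Submodule.span_le.mpr fun w hw => ?_
      obtain ⟨q, rfl⟩ := hsub (Set.mem_insert_of_mem _ hw)
      have hqs : q ≠ s := fun h => hv (Submodule.subset_span (h ▸ hw))
      simp [hqs]
    exact hle (hspan ▸ Submodule.subset_span ha)

variable {σ : Type*} [Fintype σ]

theorem linearCombination_intCast {K V : Type*} [Ring K] [AddCommGroup V] [Module K V]
    (z : σ → V) (v : σ → ℤ) :
    Fintype.linearCombination K z (Int.cast ∘ v) = Fintype.linearCombination ℤ z v := by
  simp [Fintype.linearCombination_apply, Int.cast_smul_eq_zsmul]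

variable [DecidableEq σ]

theorem single_notMem_span_of_linearCombination_eq_zero {K V : Type*} [Ring K] [AddCommGroup V]
    [Module K V] {A : Set (σ → K)} {z : σ → V}
    (hz : ∀ v ∈ A, Fintype.linearCombination K z v = 0) {l : σ} (hl : z l ≠ 0) :
    Pi.single l 1 ∉ Submodule.span K A := by
  have hle : Submodule.span K A ≤ LinearMap.ker (Fintype.linearCombination K z) :=
    Submodule.span_le.mpr hz
  exact fun hmem => hl (by simpa using hle hmem)

theorem coord_mul_det_eq_det_updateRow {R : Type*} [CommRing R] (b : Basis σ R (σ → R))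
    (s : σ) (v : σ → R) :
    b.coord s v * det (of b) = det ((of b).updateRow s v) := by
  have hsum : ∑ q, b.repr v q • of b q = v := b.sum_repr v
  rw [← smul_eq_mul, Basis.coord_apply, ← det_updateRow_sum, hsum]

theorem abs_coord_le_abs_det_updateRow {K : Type*} [Field K] [LinearOrder K]
    [IsStrictOrderedRing K] (b : Basis σ K (σ → K)) {M : Matrix σ σ ℤ}
    (hM : of b = M.map Int.cast) (s : σ) (w : σ → ℤ) :
    |b.coord s (Int.cast ∘ w)| ≤ (|(M.updateRow s w).det| : ℤ) := by
  have hcramer : b.coord s (Int.cast ∘ w) * M.det = (M.updateRow s w).det := by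
    rw [Int.cast_det, Int.cast_det, ← hM, coord_mul_det_eq_det_updateRow, hM, map_updateRow]
  have hdet : M.det ≠ 0 := by
    have hunit : IsUnit ((Pi.basisFun K σ).det b) := (Pi.basisFun K σ).isUnit_det b
    rw [Pi.basisFun_det_apply, hM, ← Int.cast_det] at hunit
    exact_mod_cast hunit.ne_zero
  have hone : (1 : K) ≤ |(M.det : K)| := by exact_mod_cast Int.one_le_abs hdet
  calc |b.coord s (Int.cast ∘ w)| ≤ |b.coord s (Int.cast ∘ w)| * |(M.det : K)| :=
        le_mul_of_one_le_right (abs_nonneg _) hone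
    _ = (|(M.updateRow s w).det| : ℤ) := by rw [← abs_mul, hcramer, Int.cast_abs]

theorem exists_rat_solution_abs_le {V : Type*} [AddCommGroup V] [Module ℚ V]
    {A : Set (σ → ℤ)} {C : ℤ}
    (hC : ∀ (M : Matrix σ σ ℤ) (s i : σ), M s = Pi.single i 1 →
      (∀ q ≠ s, M q ∈ A ∪ Set.range (Pi.single · 1)) → |M.det| ≤ C)
    {z : σ → V} (hz : ∀ v ∈ A, Fintype.linearCombination ℤ z v = 0) {l : σ} (hl : z l ≠ 0) :
    ∃ x : σ → ℚ, (∀ v ∈ A, Fintype.linearCombination ℤ x v = 0) ∧ x l = 1 ∧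
      ∀ i, |x i| ≤ C := by
  let toRat : (σ → ℤ) → σ → ℚ := fun v => Int.cast ∘ v
  have toRat_single (i : σ) : toRat (Pi.single i 1) = Pi.single i 1 := by
    ext j; simp [toRat, Pi.single_apply]
  have hspan : (Pi.single l 1 : σ → ℚ) ∉ Submodule.span ℚ (toRat '' A) :=
    single_notMem_span_of_linearCombination_eq_zero
      (Set.forall_mem_image.mpr fun v hv => (linearCombination_intCast z v).trans (hz v hv)) hl
  obtain ⟨b, s, hs, hrow, hA⟩ := exists_basis_coord_eq_zero (Pi.basisFun ℚ σ) hspan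
  have hlift (q : σ) : ∃ m ∈ A ∪ Set.range (Pi.single · 1), toRat m = b q := by
    rcases eq_or_ne q s with rfl | hq
    · exact ⟨Pi.single l 1, Or.inr ⟨l, rfl⟩, by rw [toRat_single, hs]⟩
    · rcases hrow q hq with ⟨m, hm, hmq⟩ | ⟨j, hj⟩
      · exact ⟨m, Or.inl hm, hmq⟩
      · exact ⟨Pi.single j 1, Or.inr ⟨j, rfl⟩, by rw [toRat_single, ← hj, Pi.basisFun_apply]⟩
  choose M hM hMb using hlift
  have hbM : of b = Matrix.map (of M) Int.cast := (funext hMb).symm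
  have hcomb : Fintype.linearCombination ℚ (fun i => b.coord s (Pi.single i 1)) = b.coord s := by
    ext i; simp
  refine ⟨fun i => b.coord s (Pi.single i 1), fun v hv => ?_, by simp [← hs], fun i => ?_⟩
  · rw [← linearCombination_intCast (K := ℚ), hcomb, hA _ ⟨v, hv, rfl⟩]
  · calc |b.coord s (Pi.single i 1)| ≤ (|((of M).updateRow s (Pi.single i 1)).det| : ℤ) := by
          rw [← toRat_single]
          exact abs_coord_le_abs_det_updateRow b hbM s _
      _ ≤ C := by
          refine Int.cast_le.mpr (hC _ s i updateRow_self fun q hq => ?_)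
          rw [updateRow_ne hq]
          exact hM q

end SmallSolutions

section System

variable {σ : Type*} [DecidableEq σ]

/-- The integer row of an equation `x i + x j = x k` or `x k = 1`, the constant `1` being replaced
by the variable `x l`. -/
def eqnRow (l : σ) : (σ × σ × σ) ⊕ σ → σ → ℤ :=
  Sum.elim (fun p => Pi.single p.1 1 + Pi.single p.2.1 1 - Pi.single p.2.2 1)
    (fun k => Pi.single k 1 - Pi.single l 1)

theorem linearCombination_eqnRow_eq_zero_iff [Fintype σ] {R : Type*} [Ring R] {x : σ → R} {l : σ}
    (hl : x l = 1) (e : (σ × σ × σ) ⊕ σ) :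
    Fintype.linearCombination ℤ x (eqnRow l e) = 0 ↔
      Sum.elim (fun p => x p.1 + x p.2.1 = x p.2.2) (fun k => x k = 1) e := by
  rcases e with p | k <;> simp [eqnRow, sub_eq_zero, hl]

theorem exists_add_isIncidenceRow_eq_eqnRow (l : σ) (e : (σ × σ × σ) ⊕ σ) :
    ∃ u w, IsIncidenceRow u ∧ IsIncidenceRow w ∧ u + w = eqnRow l e := by
  rcases e with p | k
  · exact ⟨_, _, isIncidenceRow_single p.1, isIncidenceRow_single_sub_single p.2.1 p.2.2,
      (add_sub_assoc ..).symm⟩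
  · exact ⟨_, _, isIncidenceRow_single_sub_single k l, isIncidenceRow_zero, add_zero _⟩

theorem abs_det_le_two_pow_of_mem_range_eqnRow [Fintype σ] {l i s : σ} {M : Matrix σ σ ℤ}
    (hs : M s = Pi.single i 1)
    (hM : ∀ q ≠ s, M q ∈ Set.range (eqnRow l) ∪ Set.range (Pi.single · 1)) :
    |M.det| ≤ 2 ^ (Fintype.card σ - 1) := by
  refine abs_det_le_two_pow_of_add_isIncidenceRow s (hs ▸ isIncidenceRow_single i) fun q hq => ?_
  rcases hM q hq with ⟨e, he⟩ | ⟨j, hj⟩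
  · exact he ▸ exists_add_isIncidenceRow_eq_eqnRow l e
  · exact ⟨_, _, isIncidenceRow_single j, isIncidenceRow_zero, (add_zero _).trans hj⟩

end System

theorem stmt4_general {σ ι R : Type*} [Fintype σ] [Ring R] [Nontrivial R] [Algebra ℚ R]
    (E : ι → (σ × σ × σ) ⊕ σ)
    (hsol : ∃ x : σ → R, ∀ e : ι,
      Sum.elim (fun p => x p.1 + x p.2.1 = x p.2.2) (fun l => x l = 1) (E e)) :
    ∃ x : σ → ℚ,
      (∀ e : ι,
        Sum.elim (fun p => x p.1 + x p.2.1 = x p.2.2) (fun l => x l = 1) (E e)) ∧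
      ∀ i, |x i| ≤ 2 ^ (Fintype.card σ - 1) := by
  classical
  obtain ⟨z, hz⟩ := hsol
  by_cases hone : ∃ e l, E e = Sum.inr l
  · obtain ⟨e₀, l, he₀⟩ := hone
    have hzl : z l = 1 := by simpa [he₀] using hz e₀
    have hdet (M : Matrix σ σ ℤ) (s i : σ) (hs : M s = Pi.single i 1)
        (hM : ∀ q ≠ s, M q ∈ Set.range (eqnRow l ∘ E) ∪ Set.range (Pi.single · 1)) :
        |M.det| ≤ 2 ^ (Fintype.card σ - 1) :=
      abs_det_le_two_pow_of_mem_range_eqnRow hs fun q hq =>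
        Set.union_subset_union_left _ (Set.range_comp_subset_range E (eqnRow l)) (hM q hq)
    have hrows : ∀ v ∈ Set.range (eqnRow l ∘ E), Fintype.linearCombination ℤ z v = 0 :=
      Set.forall_mem_range.mpr fun e => (linearCombination_eqnRow_eq_zero_iff hzl _).mpr (hz e)
    obtain ⟨x, hx, hxl, hbound⟩ :=
      exists_rat_solution_abs_le hdet hrows (hzl.trans_ne one_ne_zero)
    exact ⟨x, fun e => (linearCombination_eqnRow_eq_zero_iff hxl _).mp (hx _ ⟨e, rfl⟩),
      by simpa using hbound⟩
  · refine ⟨0, fun e => ?_, by simp⟩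
    rcases hE : E e with p | l
    · simp
    · exact absurd ⟨e, l, hE⟩ hone

theorem stmt4 {n : ℕ} (hn : 2 ≤ n) {ι : Type} [Fintype ι]
    (E : ι → (Fin n × Fin n × Fin n) ⊕ (Fin n))
    (hsol : ∃ x : Fin n → ℝ, ∀ e : ι,
      Sum.elim (fun p => x p.1 + x p.2.1 = x p.2.2) (fun l => x l = 1) (E e)) :
    ∃ x : Fin n → ℚ,
      (∀ e : ι,
        Sum.elim (fun p => x p.1 + x p.2.1 = x p.2.2) (fun l => x l = 1) (E e)) ∧
      ∀ i, |x i| ≤ 2 ^ (n - 1) := by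
  simpa using stmt4_general E hsol
end

section
/- Let A ∈ ℤ^{m×n} with ‖A‖∞ = 1 or ‖A‖∞ = 2. Then every elementary vector x of the null space N(A) satisfies ω(x) = 1. -/
/-! Since the entries of `A` are integers, an equation `∑ j, a j * x j = 0` coming from a row of
`ℓ¹`-norm at most `2` involves either at most one unknown or two with coefficients `±1`; either way
it only relates coordinates of `x` of the same absolute value. Hence replacing by zero all
coordinates with absolute value different from a given `c` keeps `x` in the null space. For an
elementary vector this must not shrink the support, so only one nonzero absolute value occurs. -/

open Function

variable {ι κ R K : Type*}

/-- A vector of `W` is elementary if it is nonzero and its support is minimal among the supports of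
the nonzero vectors of `W`; here `W` will be a null space. Membership in `W` is part of the
definition, and minimality is stated directly rather than through an order on supports. -/
structure IsElementary [Semiring R] (W : Submodule R (κ → R)) (x : κ → R) : Prop where
  mem : x ∈ W
  ne_zero : x ≠ 0
  support_eq : ∀ y ∈ W, y ≠ 0 → support y ⊆ support x → support y = support x

theorem IsElementary.support_subset_of_indicator_mem [Semiring R] {W : Submodule R (κ → R)}
    {x : κ → R} (hx : IsElementary W x) {s : Set κ} (hs : s.indicator x ∈ W)
    (hs₀ : s.indicator x ≠ 0) : support x ⊆ s := by
  have hsupp : support (s.indicator x) = s ∩ support x := Set.support_indicator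
  rw [← Set.inter_eq_right, ← hsupp]
  exact hx.support_eq _ hs hs₀ (hsupp ▸ Set.inter_subset_right)

theorem normInf_le_iff {m n k : ℕ} {A : Matrix (Fin m) (Fin n) ℤ} :
    normInf A ≤ k ↔ ∀ i, ∑ j, (A i j).natAbs ≤ k := by
  simp only [normInf, Finset.sup_le_iff, Finset.mem_univ, true_imp_iff]

section Row

variable [Fintype κ]

theorem eq_one_and_eq_one_and_eq_zero_of_sum_le_two {f : κ → ℕ} (hf : ∑ i, f i ≤ 2) {j k : κ}
    (hjk : j ≠ k) (hj : f j ≠ 0) (hk : f k ≠ 0) :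
    f j = 1 ∧ f k = 1 ∧ ∀ i, i ≠ j ∧ i ≠ k → f i = 0 := by
  classical
  have hpair : f j + f k ≤ 2 := by
    rw [← Finset.sum_pair hjk]
    exact (Finset.sum_le_univ_sum_of_nonneg fun i => (f i).zero_le).trans hf
  refine ⟨by lia, by lia, fun i ⟨hij, hik⟩ => ?_⟩
  have htriple : f i + (f j + f k) ≤ 2 := by
    rw [← Finset.sum_pair hjk, ← Finset.sum_insert (by simp [hij, hik])]
    exact (Finset.sum_le_univ_sum_of_nonneg fun i => (f i).zero_le).trans hf
  lia

variable [Ring R] [Lattice R]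

theorem abs_intCast_mul_of_natAbs_eq_one {a : ℤ} (ha : a.natAbs = 1) (x : R) :
    |(a : R) * x| = |x| := by
  rcases Int.natAbs_eq_iff.mp ha with rfl | rfl <;> simp

theorem abs_eq_abs_of_sum_intCast_mul_eq_zero {a : κ → ℤ} (ha : ∑ j, (a j).natAbs ≤ 2)
    {x : κ → R} (hx : ∑ j, (a j : R) * x j = 0) {j k : κ} (hj : a j ≠ 0) (hk : a k ≠ 0) :
    |x j| = |x k| := by
  obtain rfl | hjk := eq_or_ne j k
  · rfl
  obtain ⟨haj, hak, ha₀⟩ := eq_one_and_eq_one_and_eq_zero_of_sum_le_two ha hjk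
    (Int.natAbs_ne_zero.mpr hj) (Int.natAbs_ne_zero.mpr hk)
  have htwo : (a j : R) * x j + a k * x k = 0 := by
    rw [← hx, Fintype.sum_eq_add j k hjk fun i hi => by simp [Int.natAbs_eq_zero.mp (ha₀ i hi)]]
  calc
    |x j| = |(a j : R) * x j| := (abs_intCast_mul_of_natAbs_eq_one haj _).symm
    _ = |(a k : R) * x k| := by rw [eq_neg_of_add_eq_zero_left htwo, abs_neg]
    _ = |x k| := abs_intCast_mul_of_natAbs_eq_one hak _

theorem sum_intCast_mul_indicator_abs_eq_zero {a : κ → ℤ} (ha : ∑ j, (a j).natAbs ≤ 2)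
    {x : κ → R} (hx : ∑ j, (a j : R) * x j = 0) (c : R) :
    ∑ j, (a j : R) * {i | |x i| = c}.indicator x j = 0 := by
  by_cases h : ∃ k, a k ≠ 0 ∧ |x k| = c
  · obtain ⟨k, hk, hkc⟩ := h
    rw [← hx]
    refine Finset.sum_congr rfl fun j _ => ?_
    obtain hj | hj := eq_or_ne (a j) 0
    · simp [hj]
    · have hjc : j ∈ {i | |x i| = c} :=
        (abs_eq_abs_of_sum_intCast_mul_eq_zero ha hx hj hk).trans hkc
      rw [Set.indicator_of_mem hjc]
  · push Not at h
    refine Finset.sum_eq_zero fun j _ => ?_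
    obtain hj | hj := eq_or_ne (a j) 0
    · simp [hj]
    · have hjc : j ∉ {i | |x i| = c} := h j hj
      rw [Set.indicator_of_notMem hjc, mul_zero]

end Row

theorem IsElementary.abs_eq_abs [Fintype κ] [CommRing R] [Lattice R]
    {A : Matrix ι κ ℤ} (hA : ∀ i, ∑ j, (A i j).natAbs ≤ 2) {x : κ → R}
    (hx : IsElementary (LinearMap.ker (A.map (Int.cast : ℤ → R)).mulVecLin) x) {i j : κ}
    (hi : x i ≠ 0) (hj : x j ≠ 0) : |x j| = |x i| := by
  have hmem : {k | |x k| = |x i|}.indicator x ∈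
      LinearMap.ker (A.map (Int.cast : ℤ → R)).mulVecLin :=
    funext fun r => sum_intCast_mul_indicator_abs_eq_zero (hA r) (congrFun hx.mem r) |x i|
  have hne : {k | |x k| = |x i|}.indicator x ≠ 0 := ne_iff.mpr ⟨i, by simpa using hi⟩
  exact hx.support_subset_of_indicator_mem hmem hne hj

theorem isGreatest_abs_div_abs [Field K] [LinearOrder K] [IsStrictOrderedRing K] {x : κ → K}
    (hx : x ≠ 0) (habs : ∀ i j, x i ≠ 0 → x j ≠ 0 → |x j| = |x i|) :
    IsGreatest {r : K | ∃ i j, x i ≠ 0 ∧ r = |x j| / |x i|} 1 := by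
  obtain ⟨p, hp⟩ := ne_iff.mp hx
  refine ⟨⟨p, p, hp, (div_self (abs_ne_zero.mpr hp)).symm⟩, ?_⟩
  rintro _ ⟨i, j, hi, rfl⟩
  obtain hj | hj := eq_or_ne (x j) 0
  · simp [hj]
  · rw [habs i j hi hj, div_self (abs_ne_zero.mpr hi)]

theorem stmt7_general [Fintype κ] [Field K] [LinearOrder K] [IsStrictOrderedRing K]
    (A : Matrix ι κ ℤ) (hA : ∀ i, ∑ j, (A i j).natAbs ≤ 2) {x : κ → K}
    (hx : IsElementary (LinearMap.ker (A.map (Int.cast : ℤ → K)).mulVecLin) x) :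
    IsGreatest {r : K | ∃ i j, x i ≠ 0 ∧ r = |x j| / |x i|} 1 :=
  isGreatest_abs_div_abs hx.ne_zero fun _ _ => hx.abs_eq_abs hA

theorem stmt7 {m n : ℕ} (A : Matrix (Fin m) (Fin n) ℤ)
    (hnorm : normInf A = 1 ∨ normInf A = 2)
    (x : Fin n → ℝ) (hx : x ≠ 0)
    (hker : (A.map (Int.cast : ℤ → ℝ)).mulVec x = 0)
    (helem : ∀ y : Fin n → ℝ, y ≠ 0 → (A.map (Int.cast : ℤ → ℝ)).mulVec y = 0 →
      {i | y i ≠ 0} ⊆ {i | x i ≠ 0} → {i | y i ≠ 0} = {i | x i ≠ 0}) :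
    omegaVec x = 1 :=
  (stmt7_general A (normInf_le_iff.mp (by lia))
    ⟨hker, hx, fun y hy hy₀ => helem y hy₀ hy⟩).csSup_eq
end

section
/- Let A ∈ ℤ^{m×n} be a nonzero integer matrix with ‖A‖∞ ≥ 2 whose null space N(A) is nontrivial, and let t > 0 be the least number of nonzero coordinates among nonzero vectors of N(A). Then t − 1 ≤ rank A and ω(A) ≤ (‖A‖∞ − 1)^{t−1} ≤ (‖A‖∞ − 1)^{rank A}. -/
/-!
Let `x` be a null vector of least support, of size `k + 1`. Any `k` of the columns in the support
of `x` are linearly independent, so `k` rows can be chosen for which the `k × (k + 1)` submatrix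
`B` satisfies `det B_i ≠ 0`, where `B_i` is `B` without column `i`. By Cramer's rule
`|x j| / |x i| = |det B_j| / |det B_i| ≤ |det B_j|`.

The bound `|det B_j| ≤ (‖A‖∞ - 1) ^ k` comes from Laplace expansion. Each row of `B_j` either
has lost a nonzero entry with column `j`, and then has ℓ¹ norm at most `‖A‖∞ - 1`, or is still
orthogonal to the remaining coordinates of `x`. If the determinant is not zero, some row is not
orthogonal to them; expand along it. The rows of every minor again satisfy this alternative.
-/

open Function Matrix

/-- The integer vector `v` has ℓ¹ norm at most `q`, or at most `q + 1` when it is orthogonal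
to `y`. This is the condition on the rows of a matrix that makes a determinant bound by Laplace
expansion inductive. -/
def IsShortOrRelation {ι R : Type*} [Fintype ι] [NonAssocRing R] (q : ℕ) (y : ι → R)
    (v : ι → ℤ) : Prop :=
  ∑ c, (v c).natAbs ≤ q ∨ ∑ c, (v c).natAbs ≤ q + 1 ∧ ∑ c, (v c : R) * y c = 0

theorem IsShortOrRelation.comp_succAbove {R : Type*} [NonAssocRing R] {k q : ℕ}
    {y : Fin (k + 1) → R} {v : Fin (k + 1) → ℤ} (h : IsShortOrRelation q y v)
    (p : Fin (k + 1)) :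
    IsShortOrRelation q (y ∘ p.succAbove) (v ∘ p.succAbove) := by
  unfold IsShortOrRelation at h ⊢
  simp only [Fin.sum_univ_succAbove _ p] at h
  simp only [Function.comp_apply]
  rcases h with hshort | ⟨hlong, hrel⟩
  · exact .inl (by lia)
  · by_cases hp : v p = 0
    · exact .inr ⟨by lia, by simpa [hp] using hrel⟩
    · exact .inl (by lia)

theorem natAbs_det_le_mul_of_minor_le {k q b : ℕ} (M : Matrix (Fin (k + 1)) (Fin (k + 1)) ℤ)
    (r : Fin (k + 1)) (hr : ∑ c, (M r c).natAbs ≤ q)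
    (hminor : ∀ c : Fin (k + 1), (M.submatrix r.succAbove c.succAbove).det.natAbs ≤ b) :
    M.det.natAbs ≤ q * b := by
  rw [det_succ_row M r]
  calc (∑ c : Fin (k + 1), (-1) ^ ((r : ℕ) + (c : ℕ)) * M r c *
          (M.submatrix r.succAbove c.succAbove).det).natAbs
      ≤ ∑ c : Fin (k + 1), ((-1) ^ ((r : ℕ) + (c : ℕ)) * M r c *
          (M.submatrix r.succAbove c.succAbove).det).natAbs := Int.natAbs_sum_le _ _
    _ = ∑ c, (M r c).natAbs * (M.submatrix r.succAbove c.succAbove).det.natAbs := by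
        simp [Int.natAbs_mul, Int.natAbs_pow]
    _ ≤ ∑ c, (M r c).natAbs * b := by gcongr; exact hminor _
    _ = (∑ c, (M r c).natAbs) * b := (Finset.sum_mul ..).symm
    _ ≤ q * b := by gcongr

theorem natAbs_det_le_pow_of_isShortOrRelation {R : Type*} [CommRing R] [IsDomain R]
    [CharZero R] {k q : ℕ} (M : Matrix (Fin k) (Fin k) ℤ) (y : Fin k → R) (hy : ∀ c, y c ≠ 0)
    (hM : ∀ r, IsShortOrRelation q y (M r)) : M.det.natAbs ≤ q ^ k := by
  induction k with
  | zero => simp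
  | succ k ih =>
    by_cases hrel : ∀ r, ∑ c, (M r c : R) * y c = 0
    · have hdet : (M.map (Int.cast : ℤ → R)).det = 0 :=
        exists_mulVec_eq_zero_iff.1 ⟨y, fun h => hy 0 (congrFun h 0), funext hrel⟩
      have : M.det = 0 := by exact_mod_cast (Int.cast_det M).trans hdet
      simp [this]
    · push Not at hrel
      obtain ⟨r, hr⟩ := hrel
      rw [pow_succ']
      refine natAbs_det_le_mul_of_minor_le M r ((hM r).resolve_right fun h => hr h.2) fun p => ?_
      exact ih _ (y ∘ p.succAbove) (fun _ => hy _) fun _ => (hM _).comp_succAbove p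

theorem det_submatrix_succAbove_mul_eq_negOnePow_smul {R : Type*} [CommRing R] [IsDomain R]
    {k : ℕ} (B : Matrix (Fin k) (Fin (k + 1)) R) (x : Fin (k + 1) → R) (hx : ∀ c, x c ≠ 0)
    (hBx : B *ᵥ x = 0) (i j : Fin (k + 1)) :
    (B.submatrix id i.succAbove).det * x j =
      Int.negOnePow (i - j) • ((B.submatrix id j.succAbove).det * x i) := by
  have hscale (p : Fin (k + 1)) : (∏ c, x c) * (B.submatrix id p.succAbove).det =
      x p * ((of fun r c => x c * B r c).submatrix id p.succAbove).det := by
    rw [Fin.prod_univ_succAbove x p, mul_assoc]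
    exact congrArg (x p * ·) (det_mul_row (x ∘ p.succAbove) (B.submatrix id p.succAbove)).symm
  -- Scaling column `c` of `B` by `x c` makes all row sums zero, so the minors agree up to sign.
  have hminors := submatrix_succAbove_det_eq_negOnePow_submatrix_succAbove_det'
    (of fun r c => x c * B r c)
    (fun r => by simpa [mulVec, dotProduct, mul_comm] using congrFun hBx r) i j
  refine mul_left_cancel₀ (Finset.prod_ne_zero_iff.2 fun c _ => hx c : ∏ c, x c ≠ 0) ?_
  rw [mul_smul_comm, ← mul_assoc, ← mul_assoc, hscale, hscale, hminors, mul_smul_comm,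
    smul_mul_assoc]
  congr 1
  ring

theorem abs_le_pow_mul_abs_of_det_ne_zero {R : Type*} [CommRing R] [LinearOrder R]
    [IsStrictOrderedRing R] {k q : ℕ} (B : Matrix (Fin k) (Fin (k + 1)) ℤ)
    (hB : ∀ r, ∑ c, (B r c).natAbs ≤ q + 1) (x : Fin (k + 1) → R) (hx : ∀ c, x c ≠ 0)
    (hBx : B.map (Int.cast : ℤ → R) *ᵥ x = 0) (i j : Fin (k + 1))
    (hi : (B.submatrix id i.succAbove).det ≠ 0) : |x j| ≤ (q : R) ^ k * |x i| := by
  set d : Fin (k + 1) → ℤ := fun p => (B.submatrix id p.succAbove).det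
  have hcast (p) : ((B.map (Int.cast : ℤ → R)).submatrix id p.succAbove).det = d p :=
    (Int.cast_det _).symm
  have hcramer : |(d i : R)| * |x j| = |(d j : R)| * |x i| := by
    have h := det_submatrix_succAbove_mul_eq_negOnePow_smul _ x hx hBx i j
    rw [hcast, hcast] at h
    rw [← abs_mul, ← abs_mul, h]
    rcases Int.units_eq_one_or (Int.negOnePow (i - j)) with hs | hs <;> simp [hs]
  have hdi : (1 : R) ≤ |(d i : R)| := by exact_mod_cast Int.one_le_abs hi
  have hdj : |(d j : R)| ≤ (q : R) ^ k := by
    have h : (d j).natAbs ≤ q ^ k :=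
      natAbs_det_le_pow_of_isShortOrRelation _ (x ∘ j.succAbove) (fun _ => hx _) fun r =>
        IsShortOrRelation.comp_succAbove (.inr ⟨hB r, congrFun hBx r⟩) j
    rw [← Int.cast_abs, ← Nat.cast_natAbs]
    exact_mod_cast h
  calc |x j| ≤ |(d i : R)| * |x j| := le_mul_of_one_le_left (abs_nonneg _) hdi
    _ = |(d j : R)| * |x i| := hcramer
    _ ≤ (q : R) ^ k * |x i| := by gcongr

theorem submatrix_mulVec_comp_of_support_subset_range {l m n ι R : Type*} [Fintype n] [Fintype ι]
    [NonUnitalNonAssocSemiring R] (A : Matrix m n R) (g : l → m) {s : ι → n} (hs : Injective s)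
    {x : n → R} (hx : support x ⊆ Set.range s) :
    A.submatrix g s *ᵥ (x ∘ s) = (A *ᵥ x) ∘ g := by
  ext r
  refine Fintype.sum_of_injective s hs _ (fun c => A (g r) c * x c) (fun c hc => ?_) fun _ => rfl
  rw [notMem_support.1 (mt (@hx c) hc), mul_zero]

theorem card_le_rank_of_linearIndependent_col_submatrix {m n ι R : Type*} [Fintype n] [Fintype ι]
    [CommRing R] [Nontrivial R] {A : Matrix m n R} {s : ι → n}
    (h : LinearIndependent R (A.submatrix id s).col) : Fintype.card ι ≤ A.rank := by
  rw [← finrank_span_eq_card h, ← rank_eq_finrank_span_cols]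
  exact rank_submatrix_le A id s

theorem exists_det_submatrix_ne_zero_of_linearIndependent_col {m ι K : Type*} [Field K]
    [Finite m] [Fintype ι] [DecidableEq ι] {B : Matrix m ι K} (hB : LinearIndependent K B.col) :
    ∃ g : ι → m, (B.submatrix g id).det ≠ 0 := by
  obtain ⟨f, hf_mem, -, hf⟩ := Submodule.exists_fun_fin_finrank_span_eq K (Set.range B.row)
  choose g hg using hf_mem
  have hcard : Fintype.card ι = Module.finrank K (Submodule.span K (Set.range B.row)) := by
    rw [← rank_eq_finrank_span_row, rank_eq_finrank_span_cols, finrank_span_eq_card hB]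
  let e := Fintype.equivFinOfCardEq hcard
  have hrows : LinearIndependent K (B.submatrix (g ∘ e) id).row := by
    have hrow : (B.submatrix (g ∘ e) id).row = f ∘ e := funext fun c => hg (e c)
    exact hrow ▸ hf.comp e e.injective
  exact ⟨g ∘ e, ((isUnit_iff_isUnit_det _).1 (linearIndependent_rows_iff_isUnit.1 hrows)).ne_zero⟩

theorem exists_injective_range_eq_of_ncard_eq {α : Type*} {S : Set α} [Finite S] {k : ℕ}
    (hS : S.ncard = k) : ∃ s : Fin k → α, Injective s ∧ Set.range s = S := by
  let e : Fin k ≃ S := (Finite.equivFinOfCardEq hS).symm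
  refine ⟨(↑) ∘ e, Subtype.val_injective.comp e.injective, ?_⟩
  rw [Set.range_comp, e.surjective.range_eq, Set.image_univ, Subtype.range_coe]

/-- `x` is a nonzero vector of the null space of `A` with the least number of nonzero coordinates.
Quotients of its coordinates are, up to sign, quotients of minors of `A`. -/
structure IsSparsestNullVector {m n R : Type*} [Fintype n] [NonUnitalNonAssocSemiring R]
    (A : Matrix m n R) (x : n → R) : Prop where
  ne_zero : x ≠ 0
  mulVec_eq_zero : A *ᵥ x = 0
  ncard_support_le : ∀ z ≠ 0, A *ᵥ z = 0 → (support x).ncard ≤ (support z).ncard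

namespace IsSparsestNullVector

section Rank

variable {m n R : Type*} [Fintype n] [CommRing R] {A : Matrix m n R} {x : n → R}

theorem linearIndependent_col_submatrix (h : IsSparsestNullVector A x) {ι : Type*} [Fintype ι]
    {s : ι → n} (hs : Injective s) (hcard : Fintype.card ι < (support x).ncard) :
    LinearIndependent R (A.submatrix id s).col := by
  refine mulVec_injective_iff.1 ((injective_iff_map_eq_zero (A.submatrix id s).mulVecLin).2 ?_)
  intro v hv
  by_contra hv0
  let z : n → R := extend s v 0
  have hzs : z ∘ s = v := funext fun c => hs.extend_apply v 0 c
  have hsupp : support z ⊆ Set.range s := fun c hc => by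
    by_contra hcs
    exact hc (extend_apply' v (0 : n → R) c hcs)
  have hAz : A *ᵥ z = 0 := by
    have hsub := submatrix_mulVec_comp_of_support_subset_range A id hs hsupp
    rw [hzs] at hsub
    exact hsub.symm.trans hv
  have hz0 : z ≠ 0 := fun h0 => hv0 (by rw [← hzs, h0]; rfl)
  have hle : (support z).ncard ≤ Fintype.card ι := by
    rw [← Nat.card_eq_fintype_card, ← Set.ncard_range_of_injective hs]
    exact Set.ncard_le_ncard hsupp
  exact absurd (h.ncard_support_le z hz0 hAz) (by lia)

theorem ncard_support_sub_one_le_rank (h : IsSparsestNullVector A x) :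
    (support x).ncard - 1 ≤ A.rank := by
  obtain ⟨i, hi⟩ := support_nonempty_iff.2 h.ne_zero
  have : Nontrivial R := nontrivial_of_ne _ _ hi
  have hpos : 0 < (support x).ncard := (Set.ncard_pos).2 ⟨i, hi⟩
  obtain ⟨s, hs, -⟩ := exists_injective_range_eq_of_ncard_eq (rfl : (support x).ncard = _)
  have hindep := h.linearIndependent_col_submatrix
    (hs.comp (Fin.castLE_injective (Nat.sub_le _ 1))) (by rw [Fintype.card_fin]; lia)
  simpa only [Fintype.card_fin] using card_le_rank_of_linearIndependent_col_submatrix hindep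

end Rank

theorem abs_le_pow_mul_abs {m n K : Type*} [Finite m] [Fintype n] [Field K] [LinearOrder K]
    [IsStrictOrderedRing K] {A : Matrix m n ℤ} {x : n → K} {q : ℕ}
    (h : IsSparsestNullVector (A.map (Int.cast : ℤ → K)) x)
    (hA : ∀ r, ∑ c, (A r c).natAbs ≤ q + 1) {i : n} (hi : x i ≠ 0) (j : n) :
    |x j| ≤ (q : K) ^ ((support x).ncard - 1) * |x i| := by
  by_cases hj : x j = 0
  · rw [hj, abs_zero]
    positivity
  obtain ⟨k, hk⟩ : ∃ k, (support x).ncard = k + 1 :=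
    Nat.exists_eq_add_one.2 ((Set.ncard_pos).2 ⟨i, hi⟩)
  rw [hk, Nat.add_sub_cancel]
  obtain ⟨s, hs, hrange⟩ := exists_injective_range_eq_of_ncard_eq hk
  obtain ⟨i, rfl⟩ : i ∈ Set.range s := hrange ▸ hi
  obtain ⟨j, rfl⟩ : j ∈ Set.range s := hrange ▸ hj
  obtain ⟨g, hg⟩ := exists_det_submatrix_ne_zero_of_linearIndependent_col
    (h.linearIndependent_col_submatrix (hs.comp i.succAbove_right_injective)
      (by rw [hk, Fintype.card_fin]; exact k.lt_succ_self))
  refine abs_le_pow_mul_abs_of_det_ne_zero (A.submatrix g s) (fun r => ?_) (x ∘ s)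
    (fun c => hrange.le ⟨c, rfl⟩) ?_ i j fun h0 => hg ?_
  · calc ∑ c, (A (g r) (s c)).natAbs ≤ ∑ c, (A (g r) c).natAbs :=
          (Finset.sum_map _ ⟨s, hs⟩ fun c => (A (g r) c).natAbs).symm.trans_le
            (Finset.sum_le_sum_of_subset (Finset.subset_univ _))
      _ ≤ q + 1 := hA (g r)
  · refine (submatrix_mulVec_comp_of_support_subset_range
      (A.map (Int.cast : ℤ → K)) g hs hrange.ge).trans ?_
    rw [h.mulVec_eq_zero, Pi.zero_comp]
  · have := Int.cast_det (R := K) ((A.submatrix g s).submatrix id i.succAbove)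
    rw [h0, Int.cast_zero] at this
    exact this.symm

end IsSparsestNullVector

section RelativeMagnitude

variable {m n : ℕ}

theorem omegaVec_nonneg (x : Fin n → ℝ) : 0 ≤ omegaVec x :=
  Real.sSup_nonneg (by rintro _ ⟨i, j, -, rfl⟩; positivity)

theorem omegaVec_le {x : Fin n → ℝ} {C : ℝ} (hC : 0 ≤ C)
    (h : ∀ i j, x i ≠ 0 → |x j| ≤ C * |x i|) : omegaVec x ≤ C := by
  refine Real.sSup_le ?_ hC
  rintro _ ⟨i, j, hi, rfl⟩
  exact (div_le_iff₀ (abs_pos.2 hi)).2 (h i j hi)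

theorem omegaMat_le_omegaVec {A : Matrix (Fin m) (Fin n) ℝ} {x : Fin n → ℝ} (hx : x ≠ 0)
    (hAx : A *ᵥ x = 0) : omegaMat A ≤ omegaVec x := by
  refine csInf_le ⟨0, ?_⟩ ⟨x, hx, hAx, rfl⟩
  rintro _ ⟨y, -, -, rfl⟩
  exact omegaVec_nonneg y

theorem sum_natAbs_le_normInf (A : Matrix (Fin m) (Fin n) ℤ) (i : Fin m) :
    ∑ j, (A i j).natAbs ≤ normInf A :=
  Finset.le_sup (f := fun i => ∑ j, (A i j).natAbs) (Finset.mem_univ i)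

theorem omegaMat_le_pow_of_isSparsestNullVector {A : Matrix (Fin m) (Fin n) ℤ} {x : Fin n → ℝ}
    (h : IsSparsestNullVector (A.map (Int.cast : ℤ → ℝ)) x) (hA : 1 ≤ normInf A) :
    omegaMat (A.map (Int.cast : ℤ → ℝ)) ≤ ((normInf A : ℝ) - 1) ^ ((support x).ncard - 1) := by
  rw [← Nat.cast_pred hA]
  refine (omegaMat_le_omegaVec h.ne_zero h.mulVec_eq_zero).trans
    (omegaVec_le (by positivity) fun i j hi => h.abs_le_pow_mul_abs (fun r => ?_) hi j)
  rw [Nat.sub_add_cancel hA]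
  exact sum_natAbs_le_normInf A r

end RelativeMagnitude

theorem stmt9 {m n : ℕ} (A : Matrix (Fin m) (Fin n) ℤ) (hA : A ≠ 0)
    (hnorm : 2 ≤ normInf A) (t : ℕ) (ht0 : 0 < t)
    (ht : IsLeast {c : ℕ | ∃ x : Fin n → ℝ, x ≠ 0 ∧
      (A.map (Int.cast : ℤ → ℝ)).mulVec x = 0 ∧ {i | x i ≠ 0}.ncard = c} t) :
    t - 1 ≤ (A.map (Int.cast : ℤ → ℝ)).rank ∧
    omegaMat (A.map (Int.cast : ℤ → ℝ)) ≤ ((normInf A : ℝ) - 1) ^ (t - 1) ∧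
    ((normInf A : ℝ) - 1) ^ (t - 1) ≤
      ((normInf A : ℝ) - 1) ^ (A.map (Int.cast : ℤ → ℝ)).rank := by
  obtain ⟨⟨x, hx0, hAx, rfl⟩, hmin⟩ := ht
  have hx : IsSparsestNullVector (A.map (Int.cast : ℤ → ℝ)) x :=
    ⟨hx0, hAx, fun z hz hAz => hmin ⟨z, hz, hAz, rfl⟩⟩
  have hrank := hx.ncard_support_sub_one_le_rank
  have hbase : (1 : ℝ) ≤ normInf A - 1 := by
    have : (2 : ℝ) ≤ normInf A := by exact_mod_cast hnorm
    linarith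
  exact ⟨hrank, omegaMat_le_pow_of_isSparsestNullVector hx (by lia),
    pow_le_pow_right₀ hbase hrank⟩
end

section
/- Let t ≥ 1 be an integer, k a real number, and ε_1, …, ε_{t−1} ∈ {−1, +1}. Let C_t be the t×t symmetric tridiagonal matrix with (C_t)_{ii} = k² + 1 for 1 ≤ i ≤ t−1, (C_t)_{tt} = k², off-diagonal entries (C_t)_{i,i+1} = (C_t)_{i+1,i} = ε_i·k, and all other entries 0. Then det C_t = k^{2t}. -/
/-!
The matrix `C` is the product of the upper bidiagonal matrix with constant diagonal `k` and
superdiagonal `ε` with its own transpose: the signs square to `1`, which gives the diagonal entries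
`k ^ 2 + 1`, and the last row has no superdiagonal entry, which gives the corner `k ^ 2`. Each
factor is triangular with determinant `k ^ t`.
-/

open Finset Matrix

section Tridiagonal

variable {R : Type*}

/-- The `n × n` tridiagonal matrix with subdiagonal `l`, diagonal `d` and superdiagonal `u`; taking
`l = 0` or `u = 0` gives the bidiagonal matrices. The bands are indexed from `0` by natural numbers,
with `l i` in position `(i + 1, i)` and `u i` in position `(i, i + 1)`, so that shifted bands need
no bounds; values beyond the size of the matrix are ignored. -/
def tridiagonal [Zero R] (n : ℕ) (l d u : ℕ → R) : Matrix (Fin n) (Fin n) R :=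
  Matrix.of fun i j =>
    if (i : ℕ) = j then d i
    else if (i : ℕ) + 1 = j then u i
    else if (j : ℕ) + 1 = i then l j
    else 0

theorem tridiagonal_apply [Zero R] {n : ℕ} (l d u : ℕ → R) (i j : Fin n) :
    tridiagonal n l d u i j =
      if (i : ℕ) = j then d i
      else if (i : ℕ) + 1 = j then u i
      else if (j : ℕ) + 1 = i then l j
      else 0 :=
  rfl

theorem transpose_tridiagonal [Zero R] (n : ℕ) (l d u : ℕ → R) :
    (tridiagonal n l d u)ᵀ = tridiagonal n u d l := by
  ext i j
  simp only [transpose_apply, tridiagonal_apply]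
  grind

theorem tridiagonal_zero_left_mul_apply [NonUnitalNonAssocSemiring R] {n : ℕ} {m : Type*}
    (d u : ℕ → R) (M : Matrix (Fin n) m R) (i : Fin n) (j : m) :
    (tridiagonal n 0 d u * M) i j =
      d i * M i j + if h : (i : ℕ) + 1 < n then u i * M ⟨i + 1, h⟩ j else 0 := by
  have row_entry (p : Fin n) : tridiagonal n 0 d u i p * M p j =
      (if i = p then d i * M p j else 0) + if (i : ℕ) + 1 = p then u i * M p j else 0 := by
    simp only [tridiagonal_apply, Pi.zero_apply, ite_mul, zero_mul]
    grind
  rw [mul_apply, sum_congr rfl fun p _ => row_entry p, sum_add_distrib, sum_ite_eq,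
    if_pos (mem_univ i)]
  congr 1
  split_ifs with h
  · rw [sum_eq_single ⟨i + 1, h⟩] <;> grind
  · exact sum_eq_zero fun p _ => if_neg (by omega)

theorem tridiagonal_zero_left_mul_tridiagonal_zero_right [NonUnitalNonAssocSemiring R] (n : ℕ)
    (a u l d : ℕ → R) :
    tridiagonal n 0 a u * tridiagonal n l d 0 =
      tridiagonal n (fun i => a (i + 1) * l i)
        (fun i => a i * d i + if i + 1 < n then u i * l i else 0)
        (fun i => u i * d (i + 1)) := by
  ext i j
  rw [tridiagonal_zero_left_mul_apply]
  simp only [tridiagonal_apply, Pi.zero_apply, mul_ite, mul_zero]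
  grind

theorem isUpperTriangular_tridiagonal_zero_left [Zero R] (n : ℕ) (d u : ℕ → R) :
    (tridiagonal n 0 d u).IsUpperTriangular := by
  intro i j (hji : j < i)
  simp only [tridiagonal_apply, Pi.zero_apply]
  grind

variable [CommRing R]

theorem det_tridiagonal_zero_left (n : ℕ) (d u : ℕ → R) :
    (tridiagonal n 0 d u).det = ∏ i : Fin n, d i := by
  rw [det_of_isUpperTriangular (isUpperTriangular_tridiagonal_zero_left n d u)]
  simp only [tridiagonal_apply, if_true]

theorem det_tridiagonal_zero_right (n : ℕ) (l d : ℕ → R) :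
    (tridiagonal n l d 0).det = ∏ i : Fin n, d i := by
  rw [← det_transpose, transpose_tridiagonal, det_tridiagonal_zero_left]

end Tridiagonal

theorem stmt11_general {R : Type*} [CommRing R] {t : ℕ} (k : R) (ε : ℕ → R)
    (hε : ∀ i, i + 1 < t → ε i ^ 2 = 1)
    (C : Matrix (Fin t) (Fin t) R)
    (hC : ∀ i j : Fin t, C i j =
      if (i : ℕ) = (j : ℕ) then (if (i : ℕ) = t - 1 then k ^ 2 else k ^ 2 + 1)
      else if (i : ℕ) + 1 = (j : ℕ) then ε (i : ℕ) * k
      else if (j : ℕ) + 1 = (i : ℕ) then ε (j : ℕ) * k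
      else 0) :
    C.det = k ^ (2 * t) := by
  have factorization : C = tridiagonal t 0 (fun _ => k) ε * tridiagonal t ε (fun _ => k) 0 := by
    ext i j
    rw [tridiagonal_zero_left_mul_tridiagonal_zero_right, tridiagonal_apply, hC]
    grind
  calc C.det = (∏ _i : Fin t, k) * ∏ _i : Fin t, k := by
        rw [factorization, det_mul, det_tridiagonal_zero_left, det_tridiagonal_zero_right]
    _ = k ^ (2 * t) := by rw [Fin.prod_const, ← pow_add, two_mul]

theorem stmt11 {t : ℕ} (ht : 1 ≤ t) (k : ℝ) (ε : ℕ → ℝ)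
    (hε : ∀ i, ε i = 1 ∨ ε i = -1)
    (C : Matrix (Fin t) (Fin t) ℝ)
    (hC : ∀ i j : Fin t, C i j =
      if (i : ℕ) = (j : ℕ) then (if (i : ℕ) = t - 1 then k ^ 2 else k ^ 2 + 1)
      else if (i : ℕ) + 1 = (j : ℕ) then ε (i : ℕ) * k
      else if (j : ℕ) + 1 = (i : ℕ) then ε (j : ℕ) * k
      else 0) :
    C.det = k ^ (2 * t) :=
  stmt11_general k ε (fun i _ => sq_eq_one_iff.mpr (hε i)) C hC
end
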